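/- Let U and V be nonempty connected open subsets of ℂ such that the closure of U is compact and contained in V, and such that each of ℂ̂ ∖ U and ℂ̂ ∖ V has only finitely many connected components, where ℂ̂ = ℂ ∪ {∞} is the one-point compactification of ℂ. Let g : U → ℂ be a holomorphic map with g(U) = V that is proper as a map from U to V (preimages under g of compact subsets of V are compact) and not injective (so its degree is at least 2). Assume: (i) every critical point c ∈ U of g (a point with g′(c) = 0) has its entire forward orbit in U (inductively, g^k(c) ∈ U for all k ≥ 0); and (ii) every connected component of ℂ̂ ∖ U contains at most one connected component of ℂ̂ ∖ V. Define V_0 := V and V_{k+1} := {z ∈ U : g(z) ∈ V_k} (so V_1 = U). Then V_k is connected for every k ≥ 1, and the filled Julia set K_g := ⋂_{k≥0} V_k is a continuum: a nonempty, compact, connected set containing more than one point. -/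

import Mathlib

noncomputable section

/-- A subset of `ℂ` viewed inside the Riemann sphere `ℂ̂ = OnePoint ℂ`. -/
def sph (s : Set ℂ) : Set (OnePoint ℂ) := (fun z : ℂ => (z : OnePoint ℂ)) '' s

/-- The sets `V₀ = V`, `V_{k+1} = {z ∈ U : g z ∈ V_k}` (so `V₁ = U` when
`g '' U = V ⊇ U`). -/
def Vseq (g : ℂ → ℂ) (U V : Set ℂ) : ℕ → Set ℂ
  | 0 => V
  | k + 1 => {z | z ∈ U ∧ g z ∈ Vseq g U V k}

section
def kadj (v w : ℤ × ℤ) : Prop := |v.1 - w.1| ≤ 1 ∧ |v.2 - w.2| ≤ 1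

def WW (c v w : ℤ × ℤ) : ℤ :=
  if v.1 = c.1 ∧ w.1 = c.1 + 1 ∧ v.2 > c.2 then 1
  else if w.1 = c.1 ∧ v.1 = c.1 + 1 ∧ w.2 > c.2 then -1 else 0

def GoodAt (Q : Finset (ℤ × ℤ)) (c : ℤ × ℤ) : Prop :=
  ∃ n : ℤ × ℤ → ℤ, ∀ v ∈ Q, ∀ w ∈ Q, kadj v w → n w - n v = WW c v w

theorem kadj_iff (v w : ℤ × ℤ) : kadj v w ↔
    (v.1 - w.1 ≤ 1 ∧ w.1 - v.1 ≤ 1) ∧ (v.2 - w.2 ≤ 1 ∧ w.2 - v.2 ≤ 1) := by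
  unfold kadj; rw [abs_le, abs_le]; omega

theorem kadj_symm {v w : ℤ × ℤ} (h : kadj v w) : kadj w v := by
  rw [kadj_iff] at *; omega

theorem kadj_refl (v : ℤ × ℤ) : kadj v v := by
  rw [kadj_iff]; omega

theorem comb {G : Type*} [Group G] (T : ℤ × ℤ → ℤ × ℤ → G) (Q : Finset (ℤ × ℤ))
    (hg : ∀ c, c ∉ Q → GoodAt Q c)
    (hT : ∀ v ∈ Q, ∀ w ∈ Q, ∀ u ∈ Q, kadj v w → kadj w u → kadj v u → T v w * T w u = T v u) :
    ∃ φ : ℤ × ℤ → G, ∀ v ∈ Q, ∀ w ∈ Q, kadj v w → T v w = (φ v)⁻¹ * φ w := by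
  classical
  induction hk : Q.card generalizing Q with
  | zero =>
    rw [Finset.card_eq_zero] at hk
    subst hk
    exact ⟨fun _ => 1, by simp⟩
  | succ k ih =>
    have hne : Q.Nonempty := by
      rw [← Finset.card_pos]; omega
    obtain ⟨q, hqQ, hqmax⟩ := Q.exists_max_image (fun v => v.2) hne
    set Q' := Q.erase q with hQ'
    have hsub : ∀ v, v ∈ Q' → v ∈ Q := fun v hv => Finset.mem_of_mem_erase hv
    have hmem : ∀ v, v ∈ Q → v = q ∨ v ∈ Q' := fun v hv => by
      by_cases h : v = q
      · exact Or.inl h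
      · exact Or.inr (Finset.mem_erase.2 ⟨h, hv⟩)
    have hTid : ∀ v ∈ Q, T v v = 1 := fun v hv => by
      have := hT v hv v hv v hv (kadj_refl v) (kadj_refl v) (kadj_refl v)
      simpa using this
    have hTinv : ∀ v ∈ Q, ∀ w ∈ Q, kadj v w → T w v = (T v w)⁻¹ := fun v hv w hw h => by
      have := hT v hv w hw v hv h (kadj_symm h) (kadj_refl v)
      rw [hTid v hv] at this
      exact eq_inv_of_mul_eq_one_right this
    have hmain : ∃ φ : ℤ × ℤ → G, (∀ v ∈ Q', ∀ w ∈ Q', kadj v w → T v w = (φ v)⁻¹ * φ w) ∧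
        ∀ v ∈ Q', kadj v q → T v q = (φ v)⁻¹ * φ q := by
      obtain ⟨φ, hφ⟩ := ih Q' (by
        intro c hc
        by_cases hcq : c = q
        · refine ⟨fun _ => 0, fun v hv w hw h => ?_⟩
          have h1 := hqmax v (hsub v hv)
          have h2 := hqmax w (hsub w hw)
          rw [hcq]
          unfold WW
          show (0:ℤ) - 0 = _; split_ifs <;> omega
        · obtain ⟨n, hn⟩ := hg c (fun h => by rcases hmem c h with h | h; exacts [hcq h, hc h])
          exact ⟨n, fun v hv w hw h => hn v (hsub v hv) w (hsub w hw) h⟩)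
        (fun v hv w hw u hu => hT v (hsub v hv) w (hsub w hw) u (hsub u hu))
        (by rw [Finset.card_erase_of_mem hqQ]; omega)
      by_cases hb : (q.1, q.2 - 1) ∈ Q
      · set b : ℤ × ℤ := (q.1, q.2 - 1) with hbdef
        have hbq : b ≠ q := fun h => by
          have := congrArg Prod.snd h; simp [b] at this
        have hbQ' : b ∈ Q' := Finset.mem_erase.2 ⟨hbq, hb⟩
        refine ⟨Function.update φ q (φ b * T b q), fun v hv w hw h => ?_, fun v hv h => ?_⟩
        · rw [Function.update_of_ne (Finset.ne_of_mem_erase hv),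
            Function.update_of_ne (Finset.ne_of_mem_erase hw)]
          exact hφ v hv w hw h
        · rw [Function.update_of_ne (Finset.ne_of_mem_erase hv), Function.update_self]
          have hm := hqmax v (hsub v hv)
          have hvb : kadj v b := by
            rw [kadj_iff] at h ⊢
            simp only [b] at *
            omega
          have hbq' : kadj b q := by
            rw [kadj_iff]; simp [b]
          rw [← hT v (hsub v hv) b hb q hqQ hvb hbq' h, hφ v hv b hbQ' hvb, mul_assoc]
      · obtain ⟨n, hn⟩ := hg _ hb
        set L : ℤ × ℤ → Prop := fun v => v ∈ Q' ∧ kadj v q ∧ v.1 = q.1 - 1 with hL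
        set R : ℤ × ℤ → Prop := fun v => v ∈ Q' ∧ kadj v q ∧ v.1 = q.1 + 1 with hR
        have hLR : ∀ v ∈ Q', kadj v q → L v ∨ R v := by
          intro v hv h
          have h1 := hqmax v (hsub v hv)
          have h2 : v ≠ q := Finset.ne_of_mem_erase hv
          have h3 : v ≠ (q.1, q.2 - 1) := fun h => hb (h ▸ hsub v hv)
          have h' := h
          rw [kadj_iff] at h'
          simp only [ne_eq, Prod.ext_iff] at h2 h3 h1
          by_cases h4 : v.1 = q.1 - 1
          · exact Or.inl ⟨hv, h, h4⟩
          · refine Or.inr ⟨hv, h, ?_⟩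
            omega
        have hLL : ∀ v w, L v → L w → kadj v w := by
          rintro v w ⟨hv, hvq, hv1⟩ ⟨hw, hwq, hw1⟩
          have h1 := hqmax v (hsub v hv)
          have h2 := hqmax w (hsub w hw)
          rw [kadj_iff] at *
          omega
        have hRR : ∀ v w, R v → R w → kadj v w := by
          rintro v w ⟨hv, hvq, hv1⟩ ⟨hw, hwq, hw1⟩
          have h1 := hqmax v (hsub v hv)
          have h2 := hqmax w (hsub w hw)
          rw [kadj_iff] at *
          omega
        have hnL : ∀ v, L v → n v = n q := by
          rintro v ⟨hv, hvq, hv1⟩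
          have := hn v (hsub v hv) q hqQ hvq
          unfold WW at this
          simp only at this
          split_ifs at this <;> omega
        have hnR : ∀ v, R v → n v = n q + 1 := by
          rintro v ⟨hv, hvq, hv1⟩
          have := hn v (hsub v hv) q hqQ hvq
          unfold WW at this
          simp only [true_and, gt_iff_lt] at this
          split_ifs at this <;> omega
        have hnc : ∀ v ∈ Q', ∀ w ∈ Q', kadj v w → n v = n w := by
          intro v hv w hw h
          have := hn v (hsub v hv) w (hsub w hw) h
          have h1 := hqmax v (hsub v hv)
          have h2 := hqmax w (hsub w hw)
          have h3 : v ≠ q := Finset.ne_of_mem_erase hv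
          have h4 : w ≠ q := Finset.ne_of_mem_erase hw
          simp only [ne_eq, Prod.ext_iff] at h3 h4 h1 h2
          unfold WW at this
          simp only at this
          rw [kadj_iff] at h
          split_ifs at this <;> omega
        -- value at q
        obtain ⟨fq, hfq⟩ : ∃ fq : G, ∀ v, L v → fq = φ v * T v q := by
          by_cases hex : ∃ v, L v
          · obtain ⟨l, hl⟩ := hex
            refine ⟨φ l * T l q, fun v hv => ?_⟩
            have e1 := hφ l hl.1 v hv.1 (hLL l v hl hv)
            have e2 := hT l (hsub _ hl.1) v (hsub _ hv.1) q hqQ (hLL l v hl hv) hv.2.1 hl.2.1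
            rw [← e2, e1]; group
          · exact ⟨1, fun v hv => (hex ⟨v, hv⟩).elim⟩
        obtain ⟨g, hgR⟩ : ∃ g : G, ∀ v, R v → fq = g * φ v * T v q := by
          by_cases hex : ∃ v, R v
          · obtain ⟨l, hl⟩ := hex
            refine ⟨fq * (φ l * T l q)⁻¹, fun v hv => ?_⟩
            have e1 := hφ l hl.1 v hv.1 (hRR l v hl hv)
            have e2 := hT l (hsub _ hl.1) v (hsub _ hv.1) q hqQ (hRR l v hl hv) hv.2.1 hl.2.1
            rw [← e2, e1]; group
          · exact ⟨1, fun v hv => (hex ⟨v, hv⟩).elim⟩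
        let ψ : ℤ × ℤ → G := fun v => if n v = n q + 1 then g * φ v else φ v
        refine ⟨Function.update ψ q fq, fun v hv w hw h => ?_, fun v hv h => ?_⟩
        · rw [Function.update_of_ne (Finset.ne_of_mem_erase hv),
            Function.update_of_ne (Finset.ne_of_mem_erase hw)]
          rw [hφ v hv w hw h]
          simp only [ψ, hnc v hv w hw h]
          split_ifs <;> group
        · rw [Function.update_of_ne (Finset.ne_of_mem_erase hv), Function.update_self]
          rcases hLR v hv h with h1 | h1
          · simp only [ψ, hnL v h1]
            rw [if_neg (by omega), hfq v h1]; group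
          · simp only [ψ, hnR v h1]
            rw [if_pos trivial, hgR v h1]; group
    obtain ⟨φ, h1, h2⟩ := hmain
    refine ⟨φ, fun v hv w hw h => ?_⟩
    rcases hmem v hv with rfl | hv'
    · rcases hmem w hw with rfl | hw'
      · rw [hTid _ hv]; group
      · rw [hTinv w hw _ hv (kadj_symm h), h2 w hw' (kadj_symm h)]; group
    · rcases hmem w hw with rfl | hw'
      · exact h2 v hv' h
      · exact h1 v hv' w hw' h

end

section
theorem good_vert1 (Q : Finset (ℤ × ℤ)) (a b : ℤ) (h : (a, b+1) ∉ Q) :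
    GoodAt Q (a, b) ↔ GoodAt Q (a, b+1) := by
  have key : ∀ v ∈ Q, ∀ w ∈ Q, WW (a, b) v w = WW (a, b+1) v w := by
    intro v hv w hw
    have h1 : v ≠ (a, b+1) := fun e => h (e ▸ hv)
    have h2 : w ≠ (a, b+1) := fun e => h (e ▸ hw)
    simp only [ne_eq, Prod.ext_iff] at h1 h2
    unfold WW
    simp only
    split_ifs <;> omega
  constructor
  · rintro ⟨n, hn⟩
    exact ⟨n, fun v hv w hw hk => by rw [← key v hv w hw]; exact hn v hv w hw hk⟩
  · rintro ⟨n, hn⟩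
    exact ⟨n, fun v hv w hw hk => by rw [key v hv w hw]; exact hn v hv w hw hk⟩

theorem good_horiz1 (Q : Finset (ℤ × ℤ)) (a b : ℤ) (h0 : (a, b) ∉ Q) (h : (a+1, b) ∉ Q) :
    GoodAt Q (a, b) ↔ GoodAt Q (a+1, b) := by
  let e : ℤ × ℤ → ℤ := fun v => if v.1 = a + 1 ∧ v.2 > b then 1 else 0
  have key : ∀ v ∈ Q, ∀ w ∈ Q, kadj v w →
      WW (a, b) v w - WW (a+1, b) v w = e w - e v := by
    intro v hv w hw hk
    have h1 : v ≠ (a, b) := fun e => h0 (e ▸ hv)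
    have h2 : w ≠ (a, b) := fun e => h0 (e ▸ hw)
    have h3 : v ≠ (a+1, b) := fun e => h (e ▸ hv)
    have h4 : w ≠ (a+1, b) := fun e => h (e ▸ hw)
    rw [kadj_iff] at hk
    simp only [ne_eq, Prod.ext_iff] at h1 h2 h3 h4
    simp only [WW, e]
    split_ifs <;> omega
  constructor
  · rintro ⟨n, hn⟩
    refine ⟨fun v => n v - e v, fun v hv w hw hk => ?_⟩
    have := key v hv w hw hk
    have := hn v hv w hw hk
    simp only
    omega
  · rintro ⟨n, hn⟩
    refine ⟨fun v => n v + e v, fun v hv w hw hk => ?_⟩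
    have := key v hv w hw hk
    have := hn v hv w hw hk
    simp only
    omega

theorem good_vert (Q : Finset (ℤ × ℤ)) (a b b' : ℤ) (hb : b ≤ b')
    (h : ∀ j, b ≤ j → j ≤ b' → (a, j) ∉ Q) : GoodAt Q (a, b) ↔ GoodAt Q (a, b') := by
  induction b', hb using Int.le_induction with
  | base => rfl
  | succ m hm ih =>
    rw [ih (fun j h1 h2 => h j h1 (by omega))]
    exact good_vert1 Q a m (h _ (by omega) (by omega))

theorem good_horiz (Q : Finset (ℤ × ℤ)) (a a' b : ℤ) (hb : a ≤ a')
    (h : ∀ j, a ≤ j → j ≤ a' → (j, b) ∉ Q) : GoodAt Q (a, b) ↔ GoodAt Q (a', b) := by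
  induction a', hb using Int.le_induction with
  | base => rfl
  | succ m hm ih =>
    rw [ih (fun j h1 h2 => h j h1 (by omega))]
    exact good_horiz1 Q m b (h _ (by omega) (by omega)) (h _ (by omega) (by omega))

theorem good_rect (Q : Finset (ℤ × ℤ)) (c c' : ℤ × ℤ)
    (h : ∀ x y, min c.1 c'.1 ≤ x → x ≤ max c.1 c'.1 → min c.2 c'.2 ≤ y → y ≤ max c.2 c'.2 →
      (x, y) ∉ Q) : GoodAt Q c ↔ GoodAt Q c' := by
  obtain ⟨a, b⟩ := c
  obtain ⟨a', b'⟩ := c'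
  simp only at h
  have h1 : GoodAt Q (a, b) ↔ GoodAt Q (a, b') := by
    rcases le_total b b' with hb | hb
    · exact good_vert Q a b b' hb (fun j _ _ => h _ _ (by omega) (by omega) (by omega) (by omega))
    · exact (good_vert Q a b' b hb
        (fun j _ _ => h _ _ (by omega) (by omega) (by omega) (by omega))).symm
  rw [h1]
  rcases le_total a a' with hb | hb
  · exact good_horiz Q a a' b' hb (fun j _ _ => h _ _ (by omega) (by omega) (by omega) (by omega))
  · exact (good_horiz Q a' a b' hb
        (fun j _ _ => h _ _ (by omega) (by omega) (by omega) (by omega))).symm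

theorem good_out (Q : Finset (ℤ × ℤ)) (M : ℤ) (hM : ∀ v ∈ Q, |v.1| ≤ M ∧ |v.2| ≤ M)
    (c : ℤ × ℤ) (hc : ¬ (|c.1| ≤ M ∧ |c.2| ≤ M)) : GoodAt Q c := by
  by_cases h : c.2 < - M
  · refine ⟨fun v => if v.1 > c.1 then 1 else 0, fun v hv w hw hk => ?_⟩
    have h1 := hM v hv
    have h2 := hM w hw
    rw [abs_le, abs_le] at h1 h2
    rw [kadj_iff] at hk
    simp only [WW]
    split_ifs <;> omega
  · refine ⟨fun v => 0, fun v hv w hw hk => ?_⟩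
    have h1 := hM v hv
    have h2 := hM w hw
    rw [abs_le, abs_le] at h1 h2 hc
    rw [kadj_iff] at hk
    simp only [WW]
    split_ifs <;> omega

theorem good_all (N : Set ℂ) (hN : IsOpen N)
    (H : ∀ C ⊆ Nᶜ, IsCompact C → IsClosed (Nᶜ \ C) → C = ∅)
    (δ : ℝ) (hδ : 0 < δ) (M : ℤ) (Q : Finset (ℤ × ℤ))
    (hQ : ∀ v, v ∈ Q ↔ (|v.1| ≤ M ∧ |v.2| ≤ M) ∧
      ∀ z : ℂ, |z.re - δ * v.1| ≤ 2 * δ → |z.im - δ * v.2| ≤ 2 * δ → z ∈ N) :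
    ∀ c, c ∉ Q → GoodAt Q c := by
  have hM : ∀ v ∈ Q, |v.1| ≤ M ∧ |v.2| ≤ M := fun v hv => ((hQ v).1 hv).1
  let cl : ℂ → ℤ × ℤ := fun z => (⌊z.re / δ⌋, ⌊z.im / δ⌋)
  have fl : ∀ x : ℝ, δ * ⌊x / δ⌋ ≤ x ∧ x < δ * ⌊x / δ⌋ + δ := by
    intro x
    have h1 := Int.floor_le (x / δ)
    have h2 := Int.lt_floor_add_one (x / δ)
    rw [le_div_iff₀ hδ] at h1
    rw [div_lt_iff₀ hδ] at h2
    constructor <;> nlinarith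
  have star : ∀ a ∈ Nᶜ, ∀ c : ℤ × ℤ, |a.re - δ * c.1| ≤ 2 * δ → |a.im - δ * c.2| ≤ 2 * δ →
      (GoodAt Q (cl a) ↔ GoodAt Q c) := by
    intro a ha c h1 h2
    apply good_rect
    intro x y hx1 hx2 hy1 hy2 hxy
    refine ha (((hQ _).1 hxy).2 a ?_ ?_)
    · have := fl a.re
      simp only [cl] at hx1 hx2
      rw [abs_le] at *
      rcases min_le_iff.1 hx1 with h | h <;> rcases le_max_iff.1 hx2 with h' | h' <;>
      · have h3 := mul_le_mul_of_nonneg_left (Int.cast_le (R := ℝ).2 h) hδ.le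
        have h4 := mul_le_mul_of_nonneg_left (Int.cast_le (R := ℝ).2 h') hδ.le
        simp only at *
        constructor <;> linarith
    · have := fl a.im
      simp only [cl] at hy1 hy2
      rw [abs_le] at *
      rcases min_le_iff.1 hy1 with h | h <;> rcases le_max_iff.1 hy2 with h' | h' <;>
      · have h3 := mul_le_mul_of_nonneg_left (Int.cast_le (R := ℝ).2 h) hδ.le
        have h4 := mul_le_mul_of_nonneg_left (Int.cast_le (R := ℝ).2 h') hδ.le
        simp only at *
        constructor <;> linarith
  have near : ∀ a ∈ Nᶜ, ∀ z : ℂ, dist z a < δ → (GoodAt Q (cl a) ↔ GoodAt Q (cl z)) := by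
    intro a ha z hz
    rw [Complex.dist_eq] at hz
    have h1 := (Complex.abs_re_le_norm (z - a)).trans_lt hz
    have h2 := (Complex.abs_im_le_norm (z - a)).trans_lt hz
    rw [Complex.sub_re] at h1
    rw [Complex.sub_im] at h2
    have h3 := fl z.re
    have h4 := fl z.im
    rw [abs_lt] at h1 h2
    apply star a ha <;> simp only [cl] <;> rw [abs_le] <;> constructor <;> linarith
  set C : Set ℂ := {a | a ∈ Nᶜ ∧ ¬ GoodAt Q (cl a)} with hC
  have hNc : IsClosed Nᶜ := hN.isClosed_compl
  have hCe : C = ∅ := by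
    apply H C (fun a ha => ha.1)
    · refine Metric.isCompact_of_isClosed_isBounded ?_ ?_
      · rw [← isSeqClosed_iff_isClosed]
        intro u a hu hua
        have haN : a ∈ Nᶜ := hNc.isSeqClosed (fun n => (hu n).1) hua
        obtain ⟨n, hn⟩ := ((Metric.tendsto_nhds.1 hua) δ hδ).exists
        exact ⟨haN, fun h => (hu n).2 ((near a haN _ hn).1 h)⟩
      · refine (Metric.isBounded_iff_subset_closedBall (0:ℂ)).2 ⟨2 * (δ * (M + 1)), ?_⟩
        intro a ha
        have hcl : |(cl a).1| ≤ M ∧ |(cl a).2| ≤ M := by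
          by_contra h
          exact ha.2 (good_out Q M hM _ h)
        rw [mem_closedBall_zero_iff]
        refine (Complex.norm_le_abs_re_add_abs_im a).trans ?_
        have h1 := fl a.re
        have h2 := fl a.im
        have h3 : |((cl a).1 : ℝ)| ≤ M := by exact_mod_cast hcl.1
        have h4 : |((cl a).2 : ℝ)| ≤ M := by exact_mod_cast hcl.2
        simp only [cl] at h3 h4
        have h5 : |a.re| ≤ δ * (M + 1) := by
          rw [abs_le] at *
          constructor <;> nlinarith
        have h6 : |a.im| ≤ δ * (M + 1) := by
          rw [abs_le] at *
          constructor <;> nlinarith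
        linarith
    · rw [← isSeqClosed_iff_isClosed]
      intro u a hu hua
      have haN : a ∈ Nᶜ := hNc.isSeqClosed (fun n => (hu n).1) hua
      obtain ⟨n, hn⟩ := ((Metric.tendsto_nhds.1 hua) δ hδ).exists
      refine ⟨haN, fun h => h.2 ((near a haN _ hn).2 ?_)⟩
      by_contra h'
      exact (hu n).2 ⟨(hu n).1, h'⟩
  intro c hc
  by_cases hbox : |c.1| ≤ M ∧ |c.2| ≤ M
  · rw [hQ] at hc
    have : ∃ z : ℂ, |z.re - δ * c.1| ≤ 2 * δ ∧ |z.im - δ * c.2| ≤ 2 * δ ∧ z ∉ N := by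
      by_contra h
      push Not at h
      exact hc ⟨hbox, h⟩
    obtain ⟨z, h1, h2, h3⟩ := this
    rw [← star z h3 c h1 h2]
    by_contra h'
    have : z ∈ C := ⟨h3, h'⟩
    rw [hCe] at this
    exact this
  · exact good_out Q M hM c hbox

end

section
open Set Topology

abbrev HQ {X : Type*} [TopologicalSpace X] (x y : X) := Path.Homotopic.Quotient x y

def SmallP {N : Set ℂ} {x y : N} (p : Path x y) : Prop :=
  ∃ S : Set ℂ, Convex ℝ S ∧ S ⊆ N ∧ ∀ t, (p t : ℂ) ∈ S

theorem conv_homotopic {N S : Set ℂ} (hS : Convex ℝ S) (hSN : S ⊆ N) {x y : N} (p q : Path x y)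
    (hp : ∀ t, (p t : ℂ) ∈ S) (hq : ∀ t, (q t : ℂ) ∈ S) : p.Homotopic q := by
  refine ⟨{ toFun := fun st => ⟨(1 - (st.1 : ℝ)) • (p st.2 : ℂ) + (st.1 : ℝ) • (q st.2 : ℂ),
              hSN (hS (hp _) (hq _) (by linarith [st.1.2.2]) st.1.2.1 (by ring))⟩
            continuous_toFun := by fun_prop
            map_zero_left := ?_
            map_one_left := ?_
            prop' := ?_ }⟩
  · intro t; ext; simp
  · intro t; ext; simp
  · intro s t ht
    rcases ht with rfl | ht
    · ext; simp; ring
    · rw [mem_singleton_iff] at ht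
      subst ht
      ext; simp; ring

theorem conv_exists {N S : Set ℂ} (hS : Convex ℝ S) (hSN : S ⊆ N) (x y : N)
    (hx : (x : ℂ) ∈ S) (hy : (y : ℂ) ∈ S) : ∃ p : Path x y, ∀ t, (p t : ℂ) ∈ S := by
  have key : ∀ t : unitInterval, (1 - (t : ℝ)) • (x : ℂ) + (t : ℝ) • (y : ℂ) ∈ S := fun t =>
    hS hx hy (by linarith [t.2.2]) t.2.1 (by ring)
  refine ⟨{ toFun := fun t => ⟨(1 - (t : ℝ)) • (x : ℂ) + (t : ℝ) • (y : ℂ), hSN (key t)⟩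
            continuous_toFun := by fun_prop
            source' := by ext; simp
            target' := by ext; simp }, fun t => key t⟩

theorem small_homotopic {N : Set ℂ} {x y : N} (p q : Path x y) (hp : SmallP p) (hq : SmallP q) :
    p.Homotopic q := by
  obtain ⟨S, hS, hSN, h1⟩ := hp
  obtain ⟨S', hS', hSN', h2⟩ := hq
  obtain ⟨r, hr⟩ := conv_exists (hS.inter hS') (inter_subset_left.trans hSN) x y
    ⟨by simpa using h1 0, by simpa using h2 0⟩ ⟨by simpa using h1 1, by simpa using h2 1⟩
  exact (conv_homotopic hS hSN p r h1 (fun t => (hr t).1)).trans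
    (conv_homotopic hS' hSN' r q (fun t => (hr t).2) h2)

@[reducible] noncomputable def qGroup {X : Type*} [TopologicalSpace X] (x : X) : Group (HQ x x) :=
  letI : Mul (HQ x x) := ⟨fun a b => a.trans b⟩
  letI : Inv (HQ x x) := ⟨fun a => a.symm⟩
  letI : One (HQ x x) := ⟨Path.Homotopic.Quotient.refl x⟩
  Group.ofLeftAxioms (fun a b c => Path.Homotopic.Quotient.trans_assoc a b c)
    (fun a => Path.Homotopic.Quotient.refl_trans a) (fun a => Path.Homotopic.Quotient.symm_trans a)

theorem hq_cancel {X : Type*} [TopologicalSpace X] {x y z : X} (a : HQ x y) (b : HQ y z) :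
    a.symm.trans (a.trans b) = b := by
  rw [← Path.Homotopic.Quotient.trans_assoc, Path.Homotopic.Quotient.symm_trans,
    Path.Homotopic.Quotient.refl_trans]

theorem hq_cancel' {X : Type*} [TopologicalSpace X] {x y z : X} (a : HQ y x) (b : HQ y z) :
    a.trans (a.symm.trans b) = b := by
  rw [← Path.Homotopic.Quotient.trans_assoc, Path.Homotopic.Quotient.trans_symm,
    Path.Homotopic.Quotient.refl_trans]

theorem comb_top (N : Set ℂ) (Q : Finset (ℤ × ℤ)) (hg : ∀ c, c ∉ Q → GoodAt Q c)
    [PathConnectedSpace N] (x0 : N) (pt : ℤ × ℤ → N)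
    (hS : ∀ v ∈ Q, ∃ S : Set ℂ, Convex ℝ S ∧ S ⊆ N ∧ ∀ w, kadj v w → w ∈ Q → (pt w : ℂ) ∈ S) :
    ∃ p : ∀ v, HQ x0 (pt v), ∀ v ∈ Q, ∀ w ∈ Q, kadj v w → ∀ σ : Path (pt v) (pt w), SmallP σ →
      (p v).trans (.mk σ) = p w := by
  classical
  letI := qGroup x0
  have hmul : ∀ a b : HQ x0 x0, a * b = a.trans b := fun _ _ => rfl
  have hinv : ∀ a : HQ x0 x0, a⁻¹ = a.symm := fun _ => rfl
  let P : ∀ v, HQ x0 (pt v) := fun v => .mk (PathConnectedSpace.somePath x0 (pt v))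
  let T : ℤ × ℤ → ℤ × ℤ → HQ x0 x0 := fun v w =>
    if h : ∃ σ : Path (pt v) (pt w), SmallP σ then
      (P v).trans ((Path.Homotopic.Quotient.mk h.choose).trans (P w).symm) else 1
  have hTs : ∀ v w, ∀ σ : Path (pt v) (pt w), SmallP σ →
      T v w = (P v).trans ((Path.Homotopic.Quotient.mk σ).trans (P w).symm) := by
    intro v w σ hσ
    have h : ∃ σ : Path (pt v) (pt w), SmallP σ := ⟨σ, hσ⟩
    have : Path.Homotopic.Quotient.mk h.choose = Path.Homotopic.Quotient.mk σ :=
      Path.Homotopic.Quotient.eq.2 (small_homotopic _ _ h.choose_spec hσ)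
    simp only [T, dif_pos h, this]
  obtain ⟨φ, hφ⟩ := comb T Q hg (by
    intro v hv w hw u hu hvw hwu hvu
    obtain ⟨S, hSc, hSN, hSm⟩ := hS v hv
    have mv := hSm v (kadj_refl v) hv
    have mw := hSm w hvw hw
    have mu := hSm u hvu hu
    obtain ⟨a, ha⟩ := conv_exists hSc hSN _ _ mv mw
    obtain ⟨b, hb⟩ := conv_exists hSc hSN _ _ mw mu
    have hab : ∀ t, ((a.trans b) t : ℂ) ∈ S := by
      intro t
      rw [Path.trans_apply]
      split_ifs
      · exact ha _
      · exact hb _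
    rw [hTs v w a ⟨S, hSc, hSN, ha⟩, hTs w u b ⟨S, hSc, hSN, hb⟩,
      hTs v u (a.trans b) ⟨S, hSc, hSN, hab⟩, hmul, Path.Homotopic.Quotient.mk_trans]
    simp only [Path.Homotopic.Quotient.trans_assoc, hq_cancel])
  refine ⟨fun v => (φ v).trans (P v), fun v hv w hw h σ hσ => ?_⟩
  have e := hφ v hv w hw h
  rw [hTs v w σ hσ, hmul, hinv] at e
  have e2 := congrArg (fun z => (φ v).trans (z.trans (P w))) e
  simp only [Path.Homotopic.Quotient.trans_assoc, hq_cancel', Path.Homotopic.Quotient.symm_trans,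
    Path.Homotopic.Quotient.trans_refl] at e2
  rw [Path.Homotopic.Quotient.trans_assoc, e2]

theorem local_sys (N : Set ℂ) (hN : IsOpen N)
    (H : ∀ C ⊆ Nᶜ, IsCompact C → IsClosed (Nᶜ \ C) → C = ∅) [PathConnectedSpace N] (x0 : N)
    (R : Set ℂ) (hR : IsCompact R) (hRN : R ⊆ N) :
    ∃ δ > 0, (∀ z ∈ R, Metric.ball z δ ⊆ N) ∧ ∃ pp : ∀ z : N, HQ x0 z, ∀ z z' : N, (z : ℂ) ∈ R →
      (z' : ℂ) ∈ R → ∀ σ : Path z z', (∀ t, (σ t : ℂ) ∈ Metric.ball (z : ℂ) δ) →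
      pp z' = (pp z).trans (.mk σ) := by
  classical
  obtain ⟨ρ, hρ, hρN⟩ := hR.exists_thickening_subset_open hN hRN
  have hball : ∀ z ∈ R, Metric.ball z ρ ⊆ N := fun z hz =>
    (Metric.ball_subset_thickening hz ρ).trans hρN
  set δ := ρ / 100 with hδ
  have hδ0 : 0 < δ := by positivity
  have hρδ : ρ = 100 * δ := by rw [hδ]; ring
  obtain ⟨B, hB⟩ := (Metric.isBounded_iff_subset_closedBall (0:ℂ)).1 hR.isBounded
  obtain ⟨M, hM⟩ : ∃ M : ℤ, ∀ z ∈ R, |⌊z.re / δ⌋| ≤ M ∧ |⌊z.im / δ⌋| ≤ M := by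
    refine ⟨⌈B / δ⌉ + 1, fun z hz => ?_⟩
    have hz' := hB hz
    rw [mem_closedBall_zero_iff] at hz'
    have key : ∀ x : ℝ, |x| ≤ ‖z‖ → |⌊x / δ⌋| ≤ ⌈B / δ⌉ + 1 := by
      intro x hx
      have hx' := abs_le.1 (hx.trans hz')
      have h1 : x / δ ≤ B / δ := by gcongr; exact hx'.2
      have h2 : -(B / δ) ≤ x / δ := by
        rw [← neg_div]; gcongr; exact hx'.1
      have h3 := Int.floor_le (x / δ)
      have h4 := Int.lt_floor_add_one (x / δ)
      have h5 := Int.le_ceil (B / δ)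
      rw [abs_le]
      constructor
      · have : (-(⌈B / δ⌉ + 1 : ℤ) : ℝ) ≤ (⌊x / δ⌋ : ℝ) := by push_cast; linarith
        exact_mod_cast this
      · have : (⌊x / δ⌋ : ℝ) ≤ ((⌈B / δ⌉ + 1 : ℤ) : ℝ) := by push_cast; linarith
        exact_mod_cast this
    exact ⟨key _ (Complex.abs_re_le_norm z), key _ (Complex.abs_im_le_norm z)⟩
  let S : ℤ × ℤ → Set ℂ := fun v => {z | |z.re - δ * v.1| ≤ 2 * δ ∧ |z.im - δ * v.2| ≤ 2 * δ}
  have hSconv : ∀ v, Convex ℝ (S v) := by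
    intro v z hz w hw a b ha hb hab
    simp only [S, mem_setOf_eq, abs_le, Complex.add_re, Complex.add_im, Complex.real_smul,
      Complex.mul_re, Complex.mul_im, Complex.ofReal_re, Complex.ofReal_im] at *
    have hb' : b = 1 - a := by linarith
    subst hb'
    refine ⟨⟨?_, ?_⟩, ?_, ?_⟩ <;> nlinarith
  let Q : Finset (ℤ × ℤ) := (Finset.Icc (-M) M ×ˢ Finset.Icc (-M) M).filter (fun v => S v ⊆ N)
  have hQ : ∀ v, v ∈ Q ↔ (|v.1| ≤ M ∧ |v.2| ≤ M) ∧
      ∀ z : ℂ, |z.re - δ * v.1| ≤ 2 * δ → |z.im - δ * v.2| ≤ 2 * δ → z ∈ N := by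
    intro v
    simp only [Q, Finset.mem_filter, Finset.mem_product, Finset.mem_Icc, abs_le]
    refine and_congr Iff.rfl ⟨fun h z h1 h2 => h ⟨?_, ?_⟩, fun h z hz => h z ?_ ?_⟩
    · rw [abs_le]; exact h1
    · rw [abs_le]; exact h2
    · exact abs_le.1 hz.1
    · exact abs_le.1 hz.2
  have hg := good_all N hN H δ hδ0 M Q hQ
  let dp : ℤ × ℤ → ℂ := fun v => ⟨δ * v.1, δ * v.2⟩
  let pt : ℤ × ℤ → N := fun v => if h : dp v ∈ N then ⟨dp v, h⟩ else x0
  have hptQ : ∀ v ∈ Q, (pt v : ℂ) = dp v := by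
    intro v hv
    have : dp v ∈ N := ((hQ v).1 hv).2 _ (by simp [dp]; positivity) (by simp [dp]; positivity)
    simp only [pt, dif_pos this]
  obtain ⟨p, hp⟩ := comb_top N Q hg x0 pt (by
    intro v hv
    refine ⟨S v, hSconv v, fun z hz => ((hQ v).1 hv).2 z hz.1 hz.2, fun w hvw hw => ?_⟩
    rw [hptQ w hw]
    obtain ⟨h1, h2⟩ := hvw
    have h1' : |((v.1 : ℝ) - w.1)| ≤ 1 := by exact_mod_cast h1
    have h2' : |((v.2 : ℝ) - w.2)| ≤ 1 := by exact_mod_cast h2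
    rw [abs_le] at h1' h2'
    simp only [S, dp, mem_setOf_eq, abs_le]
    refine ⟨⟨?_, ?_⟩, ?_, ?_⟩ <;> nlinarith)
  have fl : ∀ x : ℝ, δ * ⌊x / δ⌋ ≤ x ∧ x < δ * ⌊x / δ⌋ + δ := by
    intro x
    have h1 := Int.floor_le (x / δ)
    have h2 := Int.lt_floor_add_one (x / δ)
    rw [le_div_iff₀ hδ0] at h1
    rw [div_lt_iff₀ hδ0] at h2
    constructor <;> nlinarith
  let cl : ℂ → ℤ × ℤ := fun z => (⌊z.re / δ⌋, ⌊z.im / δ⌋)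
  have hclQ : ∀ z ∈ R, cl z ∈ Q := by
    intro z hz
    rw [hQ]
    refine ⟨hM z hz, fun w h1 h2 => hball z hz ?_⟩
    rw [Metric.mem_ball, Complex.dist_eq]
    refine (Complex.norm_le_abs_re_add_abs_im _).trans_lt ?_
    have h3 := fl z.re
    have h4 := fl z.im
    simp only [cl] at h1 h2
    have h5 : |(w - z).re| ≤ 4 * δ := by
      rw [Complex.sub_re, abs_le] at *; constructor <;> linarith
    have h6 : |(w - z).im| ≤ 4 * δ := by
      rw [Complex.sub_im, abs_le] at *; constructor <;> linarith
    linarith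
  -- lattice point close to nearby points
  have hclose : ∀ z w : ℂ, dist w z < δ → dp (cl w) ∈ Metric.ball z ρ := by
    intro z w hw
    rw [Metric.mem_ball, Complex.dist_eq] at *
    refine (Complex.norm_le_abs_re_add_abs_im _).trans_lt ?_
    have h1 := (Complex.abs_re_le_norm (w - z)).trans_lt hw
    have h2 := (Complex.abs_im_le_norm (w - z)).trans_lt hw
    have h3 := fl w.re
    have h4 := fl w.im
    rw [Complex.sub_re] at *
    rw [Complex.sub_im] at *
    have h5 : |(dp (cl w)).re - z.re| ≤ 4 * δ := by
      simp only [dp, cl]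
      rw [abs_lt] at h1; rw [abs_le]; constructor <;> linarith
    have h6 : |(dp (cl w)).im - z.im| ≤ 4 * δ := by
      simp only [dp, cl]
      rw [abs_lt] at h2; rw [abs_le]; constructor <;> linarith
    linarith
  have hadj : ∀ z w : ℂ, dist w z < δ → kadj (cl z) (cl w) := by
    intro z w hw
    rw [Complex.dist_eq] at hw
    have key : ∀ x y : ℝ, |y - x| < δ → |⌊x / δ⌋ - ⌊y / δ⌋| ≤ 1 := by
      intro x y hxy
      have h1 := fl x
      have h2 := fl y
      rw [abs_lt] at hxy
      have h3 : (⌊x / δ⌋ : ℝ) < ⌊y / δ⌋ + 2 := by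
        by_contra h; push Not at h; nlinarith
      have h4 : (⌊y / δ⌋ : ℝ) < ⌊x / δ⌋ + 2 := by
        by_contra h; push Not at h; nlinarith
      have h3' : ⌊x / δ⌋ < ⌊y / δ⌋ + 2 := by exact_mod_cast h3
      have h4' : ⌊y / δ⌋ < ⌊x / δ⌋ + 2 := by exact_mod_cast h4
      rw [abs_le]; omega
    exact ⟨key _ _ ((Complex.abs_re_le_norm (w - z)).trans_lt hw),
      key _ _ ((Complex.abs_im_le_norm (w - z)).trans_lt hw)⟩
  let pp : ∀ z : N, HQ x0 z := fun z =>
    if h : ∃ σ : Path (pt (cl z)) z, SmallP σ then (p (cl z)).trans (.mk h.choose)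
    else .mk (PathConnectedSpace.somePath x0 z)
  have hpp : ∀ z : N, ∀ σ : Path (pt (cl z)) z, SmallP σ → pp z = (p (cl z)).trans (.mk σ) := by
    intro z σ hσ
    have h : ∃ σ : Path (pt (cl z)) z, SmallP σ := ⟨σ, hσ⟩
    have : Path.Homotopic.Quotient.mk h.choose = Path.Homotopic.Quotient.mk σ :=
      Path.Homotopic.Quotient.eq.2 (small_homotopic _ _ h.choose_spec hσ)
    simp only [pp, dif_pos h, this]
  refine ⟨δ, hδ0, fun z hz => (Metric.ball_subset_ball (by linarith)).trans (hball z hz), pp, ?_⟩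
  intro z z' hz hz' σ hσ
  have hzz : dist (z' : ℂ) z < δ := by simpa using hσ 1
  have hBc : Convex ℝ (Metric.ball (z : ℂ) ρ) := convex_ball _ _
  have hBN := hball z hz
  have m1 : (pt (cl z) : ℂ) ∈ Metric.ball (z : ℂ) ρ := by
    rw [hptQ _ (hclQ z hz)]; exact hclose _ _ (by simpa using hδ0)
  have m2 : (pt (cl z') : ℂ) ∈ Metric.ball (z : ℂ) ρ := by
    rw [hptQ _ (hclQ z' hz')]; exact hclose _ _ hzz
  have m3 : (z : ℂ) ∈ Metric.ball (z : ℂ) ρ := Metric.mem_ball_self hρ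
  have m4 : (z' : ℂ) ∈ Metric.ball (z : ℂ) ρ := by rw [Metric.mem_ball]; linarith
  obtain ⟨a, ha⟩ := conv_exists hBc hBN _ _ m1 m3
  obtain ⟨b, hb⟩ := conv_exists hBc hBN _ _ m2 m4
  obtain ⟨c, hc⟩ := conv_exists hBc hBN _ _ m1 m2
  have htr : ∀ {x y w : N} (u : Path x y) (v : Path y w),
      (∀ t, (u t : ℂ) ∈ Metric.ball (z : ℂ) ρ) → (∀ t, (v t : ℂ) ∈ Metric.ball (z : ℂ) ρ) →
      (∀ t, ((u.trans v) t : ℂ) ∈ Metric.ball (z : ℂ) ρ) := by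
    intro x y w u v hu hv t
    rw [Path.trans_apply]
    split_ifs
    · exact hu _
    · exact hv _
  rw [hpp z a ⟨_, hBc, hBN, ha⟩, hpp z' b ⟨_, hBc, hBN, hb⟩,
    ← hp _ (hclQ z hz) _ (hclQ z' hz') (hadj z z' hzz) c ⟨_, hBc, hBN, hc⟩,
    Path.Homotopic.Quotient.trans_assoc, Path.Homotopic.Quotient.trans_assoc,
    ← Path.Homotopic.Quotient.mk_trans, ← Path.Homotopic.Quotient.mk_trans]
  congr 1
  refine Path.Homotopic.Quotient.eq.2 (conv_homotopic hBc hBN _ _ (htr _ _ hc hb) (htr _ _ ha ?_))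
  intro t
  exact Metric.ball_subset_ball (by linarith) (hσ t)

theorem sc_of_H (N : Set ℂ) (hN : IsOpen N)
    (H : ∀ C ⊆ Nᶜ, IsCompact C → IsClosed (Nᶜ \ C) → C = ∅) (hc : IsConnected N) :
    SimplyConnectedSpace N := by
  have hpc : IsPathConnected N := hN.isConnected_iff_isPathConnected.1 hc
  haveI : PathConnectedSpace N := isPathConnected_iff_pathConnectedSpace.1 hpc
  rw [simply_connected_iff_paths_homotopic']
  refine ⟨inferInstance, fun {x y} γ γ' => ?_⟩
  set R : Set ℂ := (range fun t => (γ t : ℂ)) ∪ (range fun t => (γ' t : ℂ)) with hR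
  obtain ⟨δ, hδ, hδN, pp, hpp⟩ := local_sys N hN H x R
    ((isCompact_range (by fun_prop)).union (isCompact_range (by fun_prop)))
    (by rintro _ (⟨t, rfl⟩ | ⟨t, rfl⟩) <;> exact Subtype.property _)
  have main : ∀ σ : Path x y, (∀ t, (σ t : ℂ) ∈ R) →
      Path.Homotopic.Quotient.mk σ = (pp x).symm.trans (pp y) := by
    intro σ hσ
    have loc : ∀ t : unitInterval, ∀ᶠ t' in 𝓝 t, pp (σ t') = (pp (σ t)).trans (.mk (σ.subpath t t')) := by
      intro t
      have hcont : Continuous fun s => (σ s : ℂ) := by fun_prop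
      have h1 : ∀ᶠ s in 𝓝 t, (σ s : ℂ) ∈ Metric.ball (σ t : ℂ) δ :=
        hcont.continuousAt.eventually (Metric.ball_mem_nhds _ hδ)
      obtain ⟨ε, hε, hεb⟩ := Metric.eventually_nhds_iff_ball.1 h1
      refine Metric.eventually_nhds_iff_ball.2 ⟨ε, hε, fun t' ht' => ?_⟩
      apply hpp _ _ (hσ t) (hσ t')
      intro s
      have hmem : σ.subpath t t' s ∈ σ '' uIcc t t' := by
        rw [← Path.range_subpath]; exact mem_range_self s
      obtain ⟨u, hu, hue⟩ := hmem
      rw [← hue]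
      apply hεb
      rw [Metric.mem_ball] at *
      refine lt_of_le_of_lt ?_ ht'
      rw [Subtype.dist_eq, Subtype.dist_eq]
      exact Real.dist_left_le_of_mem_uIcc (x := (t : ℝ)) (y := u) (z := t') hu |> fun h => by
        rw [dist_comm, dist_comm (t' : ℝ)]; exact h
    have tr : ∀ a b c : unitInterval, (Path.Homotopic.Quotient.mk (σ.subpath a b)).trans
        (.mk (σ.subpath b c)) = .mk (σ.subpath a c) := by
      intro a b c
      rw [← Path.Homotopic.Quotient.mk_trans]
      exact Path.Homotopic.Quotient.eq.2 ⟨Path.Homotopy.subpathTransSubpath σ a b c⟩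
    let P : unitInterval → Prop := fun t => pp (σ t) = (pp (σ 0)).trans (.mk (σ.subpath 0 t))
    have hP : IsLocallyConstant P := by
      rw [IsLocallyConstant.iff_eventually_eq]
      intro t
      filter_upwards [loc t] with t' ht'
      simp only [P, eq_iff_iff]
      rw [ht']
      constructor
      · intro h
        have h2 := congrArg (fun z => z.trans (.mk (σ.subpath t' t))) h
        simp only [Path.Homotopic.Quotient.trans_assoc, tr] at h2
        rw [Path.subpath_self, Path.Homotopic.Quotient.mk_refl,
          Path.Homotopic.Quotient.trans_refl] at h2
        exact h2
      · intro h
        rw [h, Path.Homotopic.Quotient.trans_assoc, tr]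
    have h0 : P 0 := by
      simp only [P]
      rw [Path.subpath_self, Path.Homotopic.Quotient.mk_refl, Path.Homotopic.Quotient.trans_refl]
    have h1 : P 1 := by
      rw [hP.apply_eq_of_isPreconnected isPreconnected_univ (mem_univ 1) (mem_univ 0)]
      exact h0
    simp only [P] at h1
    rw [Path.subpath_zero_one] at h1
    have gen : ∀ a b : N, ∀ (ha : a = x) (hb : b = y),
        pp b = (pp a).trans (.mk (σ.cast ha hb)) → pp y = (pp x).trans (.mk σ) := by
      intro a b ha hb
      subst ha hb
      intro h
      exact h
    rw [gen _ _ σ.source σ.target h1, hq_cancel]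
  apply Path.Homotopic.Quotient.exact
  rw [main γ (fun t => Or.inl ⟨t, rfl⟩)]
  exact (main γ' (fun t => Or.inr ⟨t, rfl⟩)).symm

end

section
open Set Topology

theorem const_of_exp_one {X : Type*} [TopologicalSpace X] {O : Set X} (hO : IsPreconnected O)
    (h : X → ℂ) (hc : ContinuousOn h O)
    (he : ∀ z ∈ O, Complex.exp (h z) = 1) : ∀ z ∈ O, ∀ w ∈ O, h z = h w := by
  have h1 : ∀ z ∈ O, ∃ n : ℤ, h z = n * (2 * Real.pi * Complex.I) := fun z hz =>
    Complex.exp_eq_one_iff.1 (he z hz)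
  have hpi : (2 * Real.pi) ≠ 0 := by positivity
  let k : X → ℝ := fun z => (h z).im / (2 * Real.pi)
  have hk : ∀ z ∈ O, ∀ n : ℤ, h z = n * (2 * Real.pi * Complex.I) → k z = n := by
    intro z hz n hn
    simp only [k]
    rw [hn]
    simp
  have hkc : ContinuousOn k O := by
    apply ContinuousOn.div_const
    exact Complex.continuous_im.comp_continuousOn hc
  have hdisc : IsDiscrete (range ((↑) : ℤ → ℝ)) :=
    ⟨Int.isClosedEmbedding_coe_real.isEmbedding.toHomeomorph.symm.isEmbedding.discreteTopology⟩
  have hmt : MapsTo k O (range ((↑) : ℤ → ℝ)) := (fun z hz => by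
    obtain ⟨n, hn⟩ := h1 z hz
    exact ⟨n, (hk z hz n hn).symm⟩)
  intro z hz w hw
  obtain ⟨n, hn⟩ := h1 z hz
  obtain ⟨m, hm⟩ := h1 w hw
  have := hO.constant_of_mapsTo hdisc hkc hmt hz hw
  rw [hk z hz n hn, hk w hw m hm] at this
  rw [hn, hm]
  have : n = m := by exact_mod_cast this
  rw [this]

theorem ite_cont {W O : Set ℂ} [DecidablePred (· ∈ W)] (oW : IsOpen W) (f : ℂ → ℂ)
    (hf : Continuous f) (c : ℂ)
    (h : ∀ z ∈ O, z ∈ W ∨ (∀ᶠ w in 𝓝 z, w ∉ W) ∨ f z = c) :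
    ContinuousOn (fun z => if z ∈ W then f z else c) O := by
  intro z hz
  apply ContinuousAt.continuousWithinAt
  by_cases hz1 : z ∈ W
  · refine hf.continuousAt.congr ?_
    filter_upwards [oW.mem_nhds hz1] with w hw
    simp [hw]
  rcases h z hz with h | h | h
  · exact absurd h hz1
  · refine (continuousAt_const (y := c)).congr ?_
    filter_upwards [h] with w hw
    simp [hw]
  · have h3 : Filter.Tendsto f (𝓝 z) (𝓝 c) := h ▸ hf.continuousAt
    rw [ContinuousAt]
    simp only [hz1, if_false]
    exact Filter.Tendsto.if' h3 tendsto_const_nhds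

theorem unicoherent (O1 O2 : Set ℂ) (h1 : IsOpen O1) (h2 : IsOpen O2) (c1 : IsPreconnected O1)
    (c2 : IsPreconnected O2) (hU : O1 ∪ O2 = univ) : IsPreconnected (O1 ∩ O2) := by
  classical
  intro u v hu hv huv ⟨a, haO, hau⟩ ⟨b, hbO, hbv⟩
  by_contra hne
  rw [not_nonempty_iff_eq_empty] at hne
  set W1 := O1 ∩ O2 ∩ u with hW1
  set W2 := O1 ∩ O2 ∩ v with hW2
  have oW1 : IsOpen W1 := (h1.inter h2).inter hu
  have oW2 : IsOpen W2 := (h1.inter h2).inter hv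
  have hcov : ∀ z ∈ O1 ∩ O2, z ∈ W1 ∨ z ∈ W2 := fun z hz =>
    (huv hz).imp (fun h => ⟨hz, h⟩) (fun h => ⟨hz, h⟩)
  have hdis : ∀ z, z ∈ W1 → z ∈ W2 → False := fun z hz1 hz2 => by
    have : z ∈ O1 ∩ O2 ∩ (u ∩ v) := ⟨hz1.1, hz1.2, hz2.2⟩
    rw [hne] at this
    exact this
  obtain ⟨χ, hχ0, hχ1, -⟩ := exists_continuous_zero_one_of_isClosed (X := ℂ)
    (s := O2ᶜ) (t := O1ᶜ) h2.isClosed_compl h1.isClosed_compl (by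
      rw [Set.disjoint_left]
      intro z hz hz'
      have : z ∈ O1 ∪ O2 := by rw [hU]; trivial
      rcases this with h | h
      · exact hz' h
      · exact hz h)
  let e : ℂ → ℂ := fun z => 2 * Real.pi * Complex.I * (χ z : ℝ)
  have hec : Continuous e := by fun_prop
  have hexpc : Continuous fun z => Complex.exp (e z) := by fun_prop
  let F : ℂ → ℂ := fun z => if z ∈ W1 then Complex.exp (e z) else 1
  have hA : ∀ z ∈ O2ᶜ, e z = 0 := fun z hz => by
    have := hχ0 hz
    simp [e, this]
  have hB : ∀ z ∈ O1ᶜ, e z = 2 * Real.pi * Complex.I := fun z hz => by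
    have := hχ1 hz
    simp [e, this]
  have hev : ∀ z ∈ W2, ∀ᶠ w in 𝓝 z, w ∉ W1 := fun z hz => by
    filter_upwards [oW2.mem_nhds hz] with w hw h
    exact hdis w h hw
  have hF : Continuous F := by
    rw [← continuousOn_univ]
    apply ite_cont oW1 _ hexpc
    intro z _
    by_cases h : z ∈ O2
    · by_cases h' : z ∈ O1
      · exact (hcov z ⟨h', h⟩).imp id (fun h => Or.inl (hev z h))
      · rw [hB z h', Complex.exp_two_pi_mul_I]; simp
    · rw [hA z h, Complex.exp_zero]; simp
  obtain ⟨ψ, hψc, hψ⟩ := Complex.exists_continuousOn_eqOn_exp_comp (X := ℂ) (U := univ) (g := F)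
    (by
      show SimplyConnectedSpace _
      exact (Homeomorph.Set.univ ℂ).toHomotopyEquiv.simplyConnectedSpace) isOpen_univ hF.continuousOn
    (by
      rintro ⟨z, -, hz⟩
      simp only [F] at hz
      split_ifs at hz
      · exact Complex.exp_ne_zero _ hz
      · exact one_ne_zero hz)
  let u1 : ℂ → ℂ := fun z => if z ∈ W1 then e z else 0
  let u2 : ℂ → ℂ := fun z => if z ∈ W1 then e z - 2 * Real.pi * Complex.I else 0
  have hu1 : ContinuousOn u1 O1 := by
    apply ite_cont oW1 _ hec
    intro z hz
    by_cases h : z ∈ O2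
    · exact (hcov z ⟨hz, h⟩).imp id (fun h => Or.inl (hev z h))
    · exact Or.inr (Or.inr (hA z h))
  have hu2 : ContinuousOn u2 O2 := by
    apply ite_cont oW1 (fun z => e z - 2 * Real.pi * Complex.I) (by fun_prop)
    intro z hz
    by_cases h : z ∈ O1
    · exact (hcov z ⟨h, hz⟩).imp id (fun h => Or.inl (hev z h))
    · refine Or.inr (Or.inr ?_)
      rw [hB z h, sub_self]
  have k1 := const_of_exp_one c1 (fun z => ψ z - u1 z) ((hψc.mono (subset_univ _)).sub hu1) (by
    intro z hz
    have := hψ (mem_univ z)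
    simp only [Function.comp] at this
    rw [Complex.exp_sub, this]
    simp only [F, u1]
    split_ifs
    · exact div_self (Complex.exp_ne_zero _)
    · simp)
  have k2 := const_of_exp_one c2 (fun z => ψ z - u2 z) ((hψc.mono (subset_univ _)).sub hu2) (by
    intro z hz
    have := hψ (mem_univ z)
    simp only [Function.comp] at this
    rw [Complex.exp_sub, this]
    simp only [F, u2]
    split_ifs
    · rw [Complex.exp_sub, Complex.exp_two_pi_mul_I, div_one]
      exact div_self (Complex.exp_ne_zero _)
    · simp)
  have haW : a ∈ W1 := ⟨haO, hau⟩
  have hbW : b ∉ W1 := fun h => hdis b h ⟨hbO, hbv⟩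
  have e1 := k1 a haO.1 b hbO.1
  have e2 := k2 a haO.2 b hbO.2
  simp only [u1, u2, if_pos haW, if_neg hbW] at e1 e2
  apply Complex.two_pi_I_ne_zero
  linear_combination e2 - e1

noncomputable def EE (c : ℂ) (ζ : ℂ) : OnePoint ℂ := ((c + Complex.exp ζ : ℂ) : OnePoint ℂ)

theorem EE_cont (c : ℂ) : Continuous (EE c) :=
  OnePoint.continuous_coe.comp (by fun_prop)

theorem EE_open (c : ℂ) : IsOpenMap (EE c) :=
  OnePoint.isOpenMap_coe.comp ((Homeomorph.addLeft c).isOpenMap.comp Complex.isOpenMap_exp)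

theorem EE_ne_infty (c ζ : ℂ) : EE c ζ ≠ OnePoint.infty := OnePoint.coe_ne_infty _

theorem EE_ne (c ζ : ℂ) : EE c ζ ≠ (c : OnePoint ℂ) := by
  unfold EE
  intro h
  rw [OnePoint.coe_eq_coe] at h
  exact Complex.exp_ne_zero ζ (by simpa using h)

/-- half-plane neighbourhoods -/
theorem EE_nhd (c : ℂ) (P : Set (OnePoint ℂ)) (hP : IsOpen P) (s : OnePoint ℂ) (hs : s ∈ P)
    (hs' : s = (c : OnePoint ℂ) ∨ s = OnePoint.infty) :
    ∃ D : Set (OnePoint ℂ), IsOpen D ∧ s ∈ D ∧ D ⊆ P ∧ IsPreconnected (EE c ⁻¹' D) := by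
  rcases hs' with rfl | rfl
  · have h1 : IsOpen ((↑) ⁻¹' P : Set ℂ) := hP.preimage OnePoint.continuous_coe
    obtain ⟨r, hr, hrP⟩ := Metric.isOpen_iff.1 h1 c hs
    refine ⟨(↑) '' Metric.ball c r, OnePoint.isOpen_image_coe.2 Metric.isOpen_ball,
      ⟨c, Metric.mem_ball_self hr, rfl⟩, by rintro _ ⟨z, hz, rfl⟩; exact hrP hz, ?_⟩
    have : EE c ⁻¹' ((↑) '' Metric.ball c r) = {ζ | ζ.re < Real.log r} := by
      ext ζ
      simp only [mem_preimage, EE, mem_image, OnePoint.coe_eq_coe, exists_eq_right,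
        Metric.mem_ball, Complex.dist_eq, add_sub_cancel_left, Complex.norm_exp, mem_setOf_eq]
      exact (Real.lt_log_iff_exp_lt hr).symm
    rw [this]
    exact (convex_halfSpace_re_lt _).isPreconnected
  · have h1 := ((OnePoint.isOpen_iff_of_mem hs).1 hP).2
    obtain ⟨R, hR⟩ := (Metric.isBounded_iff_subset_closedBall c).1 h1.isBounded
    set R' := max R 1 with hR'
    have hR0 : 0 < R' := lt_of_lt_of_le one_pos (le_max_right _ _)
    refine ⟨((OnePoint.some : ℂ → OnePoint ℂ) '' Metric.closedBall c R')ᶜ, OnePoint.isOpen_compl_image_coe.2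
      ⟨Metric.isClosed_closedBall, isCompact_closedBall _ _⟩, OnePoint.infty_notMem_image_coe,
      ?_, ?_⟩
    · rw [compl_subset_comm]
      intro s hs2
      induction s using OnePoint.rec with
      | infty => exact absurd hs hs2
      | coe z => exact ⟨z, Metric.closedBall_subset_closedBall (le_max_left _ _) (hR hs2), rfl⟩
    · have : EE c ⁻¹' ((OnePoint.some : ℂ → OnePoint ℂ) '' Metric.closedBall c R')ᶜ = {ζ | Real.log R' < ζ.re} := by
        ext ζ
        simp only [mem_preimage, EE, mem_compl_iff, mem_image, OnePoint.coe_eq_coe, exists_eq_right,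
          Metric.mem_closedBall, Complex.dist_eq, add_sub_cancel_left, Complex.norm_exp,
          mem_setOf_eq, not_le]
        exact (Real.log_lt_iff_lt_exp hR0).symm
      rw [this]
      exact (convex_halfSpace_re_gt _).isPreconnected

theorem exp_conn (c : ℂ) (P : Set (OnePoint ℂ)) (hP : IsOpen P) (hPc : IsPreconnected P)
    (s : OnePoint ℂ) (hs : s ∈ P) (hs' : s = (c : OnePoint ℂ) ∨ s = OnePoint.infty)
    (hs2 : ∀ s' ∈ P, (s' = (c : OnePoint ℂ) ∨ s' = OnePoint.infty) → s' = s) :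
    IsPreconnected (EE c ⁻¹' P) := by
  have hsr : ∀ ζ, EE c ζ ≠ s := by
    intro ζ h
    rcases hs' with rfl | rfl
    · exact EE_ne c ζ h
    · exact EE_ne_infty c ζ h
  obtain ⟨D, hDo, hsD, hDP, hDc⟩ := EE_nhd c P hP s hs hs'
  -- the key statement
  have key : ∀ u v : Set ℂ, IsOpen u → IsOpen v → EE c ⁻¹' P ⊆ u ∪ v →
      (EE c ⁻¹' P ∩ (u ∩ v)) = ∅ → EE c ⁻¹' D ⊆ u → ¬ (EE c ⁻¹' P ∩ v).Nonempty := by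
    intro u v hu hv huv hd hDu hne
    set B := EE c ⁻¹' P ∩ v with hB
    have hBo : IsOpen B := (hP.preimage (EE_cont c)).inter hv
    have hBP : EE c '' B ⊆ P := by rintro _ ⟨ζ, hζ, rfl⟩; exact hζ.1
    have hcl : ∀ w ∈ P, w ∈ closure (EE c '' B) → w ∈ EE c '' B := by
      intro w hwP hw
      by_cases hws : w = (c : OnePoint ℂ) ∨ w = OnePoint.infty
      · have := hs2 w hwP hws
        subst this
        obtain ⟨_, hx, ⟨ζ, hζ, rfl⟩⟩ := mem_closure_iff.1 hw D hDo hsD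
        have : ζ ∈ EE c ⁻¹' P ∩ (u ∩ v) := ⟨hζ.1, hDu hx, hζ.2⟩
        rw [hd] at this
        exact this.elim
      · push Not at hws
        obtain ⟨z, rfl⟩ := OnePoint.ne_infty_iff_exists.1 hws.2
        have hzc : z - c ≠ 0 := fun h => hws.1 (by rw [sub_eq_zero.1 h])
        have h1 : IsOpen ((↑) ⁻¹' P : Set ℂ) := hP.preimage OnePoint.continuous_coe
        obtain ⟨r0, hr0, hrP⟩ := Metric.isOpen_iff.1 h1 z hwP
        have hn : 0 < ‖z - c‖ := norm_pos_iff.2 hzc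
        set r := min r0 (‖z - c‖ / 4) with hr
        have hrpos : 0 < r := lt_min hr0 (by positivity)
        have hr4 : r ≤ ‖z - c‖ / 4 := min_le_right _ _
        obtain ⟨_, hx, ⟨ζ, hζ, rfl⟩⟩ := mem_closure_iff.1 hw ((↑) '' Metric.ball z r)
          (OnePoint.isOpen_image_coe.2 Metric.isOpen_ball) ⟨z, Metric.mem_ball_self hrpos, rfl⟩
        obtain ⟨z', hz', hz'e⟩ := hx
        have hz'2 : z' = c + Complex.exp ζ := by
          unfold EE at hz'e; exact OnePoint.coe_injective hz'e
        have hexp : Complex.exp ζ = z' - c := by rw [hz'2]; ring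
        let β : ℂ → ℂ := fun y => ζ + Complex.log ((y - c) / Complex.exp ζ)
        have hslit : ∀ y ∈ Metric.ball z r, (y - c) / Complex.exp ζ ∈ Complex.slitPlane := by
          intro y hy
          apply Complex.ball_one_subset_slitPlane
          rw [Metric.mem_ball, Complex.dist_eq] at *
          have hne0 := Complex.exp_ne_zero ζ
          have e1 : (y - c) / Complex.exp ζ - 1 = (y - z') / Complex.exp ζ := by
            field_simp; rw [hexp]; ring
          rw [e1, norm_div, div_lt_one (norm_pos_iff.2 hne0), hexp]
          have t1 : ‖y - z'‖ ≤ ‖y - z‖ + ‖z' - z‖ := by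
            have := norm_sub_le (y - z) (z' - z); simpa using this
          have t2 : ‖z - c‖ ≤ ‖z' - c‖ + ‖z' - z‖ := by
            have := norm_sub_le (z' - c) (z' - z); simpa using this
          linarith
        have hβc : ContinuousOn β (Metric.ball z r) := by
          apply continuousOn_const.add
          apply ContinuousOn.clog _ hslit
          fun_prop
        have hβE : ∀ y ∈ Metric.ball z r, EE c (β y) = (y : OnePoint ℂ) := by
          intro y hy
          have hne : (y - c) / Complex.exp ζ ≠ 0 := Complex.slitPlane_ne_zero (hslit y hy)
          have hne0 := Complex.exp_ne_zero ζ
          simp only [EE, β]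
          rw [Complex.exp_add, Complex.exp_log hne]
          congr 1
          field_simp
          ring
        have himc : IsPreconnected (β '' Metric.ball z r) :=
          (convex_ball z r).isPreconnected.image _ hβc
        have himP : β '' Metric.ball z r ⊆ EE c ⁻¹' P := by
          rintro _ ⟨y, hy, rfl⟩
          rw [mem_preimage, hβE y hy]
          exact hrP (Metric.ball_subset_ball (min_le_left _ _) hy)
        have hβz' : β z' = ζ := by
          simp only [β]
          rw [← hexp, div_self (Complex.exp_ne_zero ζ), Complex.log_one, add_zero]
        have hv' : β z ∈ v := by
          by_contra hnv
          have hzu : β z ∈ u := by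
            rcases huv (himP ⟨z, Metric.mem_ball_self hrpos, rfl⟩) with h | h
            · exact h
            · exact absurd h hnv
          obtain ⟨y, hy1, hy2⟩ := himc u v hu hv (himP.trans huv)
            ⟨β z, ⟨z, Metric.mem_ball_self hrpos, rfl⟩, hzu⟩ ⟨ζ, ⟨z', hz', hβz'⟩, hζ.2⟩
          have : y ∈ EE c ⁻¹' P ∩ (u ∩ v) := ⟨himP hy1, hy2⟩
          rw [hd] at this
          exact this.elim
        exact ⟨β z, ⟨himP ⟨z, Metric.mem_ball_self hrpos, rfl⟩, hv'⟩,
          hβE z (Metric.mem_ball_self hrpos)⟩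
    -- connectedness of P
    obtain ⟨ζ0, hζ0⟩ := hne
    have hsB : s ∉ EE c '' B := by rintro ⟨ζ, -, h⟩; exact hsr ζ h
    obtain ⟨w, hwP, hw1, hw2⟩ := hPc (EE c '' B) (closure (EE c '' B))ᶜ (EE_open c B hBo)
      isClosed_closure.isOpen_compl (fun w hw => by
        by_cases h : w ∈ closure (EE c '' B)
        · exact Or.inl (hcl w hw h)
        · exact Or.inr h) ⟨_, hζ0.1, ⟨ζ0, hζ0, rfl⟩⟩ ⟨s, hs, fun h => hsB (hcl s hs h)⟩
    exact hw2 (subset_closure hw1)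
  intro u v hu hv huv hne1 hne2
  by_contra hd
  rw [not_nonempty_iff_eq_empty] at hd
  have hDP' : EE c ⁻¹' D ⊆ EE c ⁻¹' P := preimage_mono hDP
  have hDuv : EE c ⁻¹' D ⊆ u ∨ EE c ⁻¹' D ⊆ v := by
    by_contra h
    push Not at h
    obtain ⟨a, ha, hau⟩ := not_subset.1 h.1
    obtain ⟨b, hb, hbv⟩ := not_subset.1 h.2
    obtain ⟨y, hy1, hy2⟩ := hDc u v hu hv (hDP'.trans huv)
      ⟨b, hb, (huv (hDP' hb)).resolve_right hbv⟩ ⟨a, ha, (huv (hDP' ha)).resolve_left hau⟩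
    have : y ∈ EE c ⁻¹' P ∩ (u ∩ v) := ⟨hDP' hy1, hy2⟩
    rw [hd] at this
    exact this.elim
  rcases hDuv with h | h
  · exact key u v hu hv huv hd h hne2
  · exact key v u hv hu (by rwa [union_comm]) (by rwa [inter_comm v u]) h hne1

end

section
open Set Topology

theorem no_compact_part (c : ℂ) (Z : Set (OnePoint ℂ)) (hZ : IsClosed Z) (hZc : IsPreconnected Z)
    (s : OnePoint ℂ) (hs : s ∈ Z) (hs' : s = (c : OnePoint ℂ) ∨ s = OnePoint.infty)
    (C : Set ℂ) (hC : C ⊆ EE c ⁻¹' Z) (hCc : IsCompact C) (hcl : IsClosed (EE c ⁻¹' Z \ C)) :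
    C = ∅ := by
  by_contra hne
  obtain ⟨ζ, hζ⟩ := nonempty_iff_ne_empty.2 hne
  have hsr : ∀ ζ, EE c ζ ≠ s := by
    intro ζ h
    rcases hs' with rfl | rfl
    · exact EE_ne c ζ h
    · exact EE_ne_infty c ζ h
  have hk : IsClosed (EE c '' C) := (hCc.image (EE_cont c)).isClosed
  have ho : IsOpen (EE c '' (EE c ⁻¹' Z \ C)ᶜ) := EE_open c _ hcl.isOpen_compl
  obtain ⟨w, hwZ, hw1, hw2⟩ := hZc _ _ ho hk.isOpen_compl (by
    intro w hw
    by_cases h : w ∈ EE c '' C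
    · left
      obtain ⟨ξ, hξ, rfl⟩ := h
      exact ⟨ξ, fun h => h.2 hξ, rfl⟩
    · exact Or.inr h) ⟨EE c ζ, hC hζ, ζ, fun h => h.2 hζ, rfl⟩
    ⟨s, hs, fun ⟨ξ, _, h⟩ => hsr ξ h⟩
  obtain ⟨ξ, hξ, rfl⟩ := hw1
  apply hw2
  refine ⟨ξ, ?_, rfl⟩
  by_contra h
  exact hξ ⟨hwZ, h⟩

theorem plane_aux (c : ℂ) (A Z : Set (OnePoint ℂ)) (hA : IsClosed A)
    (hZ : IsClosed Z) (hAc : IsPreconnected Aᶜ) (hZc : IsPreconnected Zᶜ)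
    (hd : Disjoint Z A)
    (hcs : ((c : OnePoint ℂ) ∈ A ∧ OnePoint.infty ∈ Z) ∨
      (OnePoint.infty ∈ A ∧ (c : OnePoint ℂ) ∈ Z)) :
    IsPreconnected (EE c ⁻¹' (Z ∪ A)ᶜ) := by
  have hd' : ∀ s, s ∈ Z → s ∈ A → False := fun s h1 h2 => disjoint_left.1 hd h1 h2
  have e : EE c ⁻¹' (Z ∪ A)ᶜ = EE c ⁻¹' Zᶜ ∩ EE c ⁻¹' Aᶜ := by rw [compl_union, preimage_inter]
  rw [e]
  have key : IsPreconnected (EE c ⁻¹' Zᶜ) ∧ IsPreconnected (EE c ⁻¹' Aᶜ) := by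
    rcases hcs with ⟨h1, h2⟩ | ⟨h1, h2⟩
    · constructor
      · refine exp_conn c _ hZ.isOpen_compl hZc c (fun h => hd' _ h h1) (Or.inl rfl) ?_
        rintro s' hs' (rfl | rfl)
        · rfl
        · exact absurd h2 hs'
      · refine exp_conn c _ hA.isOpen_compl hAc OnePoint.infty (fun h => hd' _ h2 h) (Or.inr rfl) ?_
        rintro s' hs' (rfl | rfl)
        · exact absurd h1 hs'
        · rfl
    · constructor
      · refine exp_conn c _ hZ.isOpen_compl hZc OnePoint.infty (fun h => hd' _ h h1) (Or.inr rfl) ?_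
        rintro s' hs' (rfl | rfl)
        · exact absurd h2 hs'
        · rfl
      · refine exp_conn c _ hA.isOpen_compl hAc c (fun h => hd' _ h2 h) (Or.inl rfl) ?_
        rintro s' hs' (rfl | rfl)
        · rfl
        · exact absurd h1 hs'
  refine unicoherent _ _ (hZ.isOpen_compl.preimage (EE_cont c))
    (hA.isOpen_compl.preimage (EE_cont c)) key.1 key.2 ?_
  rw [← preimage_union, ← compl_inter, hd.inter_eq]
  simp

theorem section_lemma {E' : Type*} [TopologicalSpace E'] (p : E' → ℂ) (c : ℂ)
    (A B Z : Set (OnePoint ℂ)) (hA : IsClosed A) (hB : IsClosed B)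
    (hZ : IsClosed Z) (hAc : IsPreconnected Aᶜ) (hBc : IsPreconnected Bᶜ) (hZc : IsPreconnected Zᶜ)
    (hBp : IsPreconnected B) (hZp : IsPreconnected Z) (hBA : B ⊆ A)
    (hd : Disjoint Z A)
    (hcs : ((c : OnePoint ℂ) ∈ B ∧ OnePoint.infty ∈ Z) ∨
      (OnePoint.infty ∈ B ∧ (c : OnePoint ℂ) ∈ Z))
    (hp : IsCoveringMapOn p {z : ℂ | (z : OnePoint ℂ) ∈ (Z ∪ B)ᶜ})
    (x y : E') (hx : (p x : OnePoint ℂ) ∈ (Z ∪ A)ᶜ) (hy : (p y : OnePoint ℂ) ∈ (Z ∪ A)ᶜ)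
    (hj : JoinedIn (p ⁻¹' {z : ℂ | (z : OnePoint ℂ) ∈ (Z ∪ B)ᶜ}) x y) :
    ∃ S : Set E', IsPreconnected S ∧ x ∈ S ∧ y ∈ S ∧
      ∀ e ∈ S, (p e : OnePoint ℂ) ∈ (Z ∪ A)ᶜ := by
  have hN'c := plane_aux c A Z hA hZ hAc hZc hd
    (hcs.imp (fun h => ⟨hBA h.1, h.2⟩) (fun h => ⟨hBA h.1, h.2⟩))
  have hdB : Disjoint Z B := hd.mono_right hBA
  have hNc := plane_aux c B Z hB hZ hBc hZc hdB hcs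
  set D : Set ℂ := {z : ℂ | (z : OnePoint ℂ) ∈ (Z ∪ B)ᶜ} with hD
  set N := EE c ⁻¹' (Z ∪ B)ᶜ with hN
  have hNo : IsOpen N := (hZ.union hB).isOpen_compl.preimage (EE_cont c)
  obtain ⟨γ, hγ⟩ := hj
  have hcD : c ∉ D := by
    rcases hcs with h | h
    · exact fun h' => h' (Or.inr h.1)
    · exact fun h' => h' (Or.inl h.2)
  have hpγ : Continuous (fun t => p (γ t)) :=
    hp.continuousOn.comp_continuous γ.continuous hγ
  have h0 : p x - c ≠ 0 := by
    intro h
    apply hcD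
    rw [← sub_eq_zero.1 h]
    simpa using hγ 0
  haveI : ContractibleSpace unitInterval :=
    (convex_Icc (0:ℝ) 1).contractibleSpace ⟨0, by simp⟩
  haveI : LocallyPathConnectedSpace unitInterval :=
    (isQuotientMap_projIcc (h := zero_le_one (α := ℝ))).locallyPathConnectedSpace
  obtain ⟨ζ, ⟨hζ0, hζ⟩, -⟩ := Complex.isCoveringMapOn_exp.existsUnique_continuousMap_lifts
    (⟨fun t => p (γ t) - c, hpγ.sub continuous_const⟩ : C(unitInterval, ℂ))
    (a₀ := 0) (e₀ := Complex.log (p x - c))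
    (by rw [Complex.exp_log h0]; simp) (by
      intro t h
      apply hcD
      have : p (γ t) = c := sub_eq_zero.1 h
      rw [← this]
      exact hγ t)
  have hζ' : ∀ t, c + Complex.exp (ζ t) = p (γ t) := by
    intro t
    have := congrFun hζ t
    simp only [Function.comp, ContinuousMap.coe_mk] at this
    rw [this]; ring
  have hζN : ∀ t, ζ t ∈ N := by
    intro t
    have : ((c + Complex.exp (ζ t) : ℂ) : OnePoint ℂ) ∈ (Z ∪ B)ᶜ := by
      rw [hζ' t]; exact hγ t
    exact this
  -- simply connected
  haveI : SimplyConnectedSpace N := by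
    refine sc_of_H N hNo ?_ ⟨⟨_, hζN 0⟩, hNc⟩
    have hZB : ∃ s ∈ Z, s = (c : OnePoint ℂ) ∨ s = OnePoint.infty := by
      rcases hcs with h | h
      · exact ⟨_, h.2, Or.inr rfl⟩
      · exact ⟨_, h.2, Or.inl rfl⟩
    have hBB : ∃ s ∈ B, s = (c : OnePoint ℂ) ∨ s = OnePoint.infty := by
      rcases hcs with h | h
      · exact ⟨_, h.1, Or.inl rfl⟩
      · exact ⟨_, h.1, Or.inr rfl⟩
    obtain ⟨s1, h1, h1'⟩ := hZB
    obtain ⟨s2, h2, h2'⟩ := hBB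
    intro C hC hCc hCcl
    have hNe : Nᶜ = EE c ⁻¹' Z ∪ EE c ⁻¹' B := by
      rw [hN, ← preimage_compl, compl_compl, preimage_union]
    have hZcl : IsClosed (EE c ⁻¹' Z) := hZ.preimage (EE_cont c)
    have hBcl : IsClosed (EE c ⁻¹' B) := hB.preimage (EE_cont c)
    have e1 := no_compact_part c Z hZ hZp s1 h1 h1' (C ∩ EE c ⁻¹' Z) inter_subset_right
      (hCc.inter_right hZcl) (by
        have : EE c ⁻¹' Z \ (C ∩ EE c ⁻¹' Z) = (Nᶜ \ C) ∩ EE c ⁻¹' Z := by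
          rw [hNe]; ext z; simp only [mem_diff, mem_inter_iff, mem_union]; tauto
        rw [this]; exact hCcl.inter hZcl)
    have e2 := no_compact_part c B hB hBp s2 h2 h2' (C ∩ EE c ⁻¹' B) inter_subset_right
      (hCc.inter_right hBcl) (by
        have : EE c ⁻¹' B \ (C ∩ EE c ⁻¹' B) = (Nᶜ \ C) ∩ EE c ⁻¹' B := by
          rw [hNe]; ext z; simp only [mem_diff, mem_inter_iff, mem_union]; tauto
        rw [this]; exact hCcl.inter hBcl)
    rw [eq_empty_iff_forall_notMem]
    intro z hz
    have := hC hz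
    rw [hNe] at this
    rcases this with h | h
    · exact (eq_empty_iff_forall_notMem.1 e1 z) ⟨hz, h⟩
    · exact (eq_empty_iff_forall_notMem.1 e2 z) ⟨hz, h⟩
  haveI : LocallyPathConnectedSpace N := hNo.locallyPathConnectedSpace
  obtain ⟨s, ⟨hs0, hs⟩, -⟩ := hp.existsUnique_continuousMap_lifts
    (⟨fun ξ : N => c + Complex.exp ξ.1, by fun_prop⟩ : C(N, ℂ))
    (a₀ := ⟨ζ 0, hζN 0⟩) (e₀ := x)
    (by simp only [ContinuousMap.coe_mk]; rw [hζ' 0]; simp) (fun ξ => ξ.2)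
  have hs' : ∀ ξ, p (s ξ) = c + Complex.exp ξ.1 := fun ξ => congrFun hs ξ
  -- uniqueness
  obtain ⟨F, -, hF⟩ := hp.existsUnique_continuousMap_lifts
    (⟨fun t => p (γ t), hpγ⟩ : C(unitInterval, ℂ))
    (a₀ := 0) (e₀ := x) (by simp) (fun t => hγ t)
  have u1 := hF γ.toContinuousMap ⟨by simp, by ext t; rfl⟩
  have u2 := hF (s.comp ⟨fun t => (⟨ζ t, hζN t⟩ : N), by fun_prop⟩) ⟨by simpa using hs0, by
    ext t
    simp only [Function.comp, ContinuousMap.comp_apply, ContinuousMap.coe_mk]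
    rw [hs', hζ']⟩
  have hy1 : s ⟨ζ 1, hζN 1⟩ = y := by
    have := congrArg (fun f : C(unitInterval, E') => f 1) (u2.trans u1.symm)
    simpa using this
  refine ⟨s '' {ξ : N | EE c ξ.1 ∈ (Z ∪ A)ᶜ}, ?_, ?_, ?_, ?_⟩
  · apply IsPreconnected.image _ _ s.continuous.continuousOn
    have himg : Subtype.val '' {ξ : N | EE c ξ.1 ∈ (Z ∪ A)ᶜ} = EE c ⁻¹' (Z ∪ A)ᶜ := by
      ext z
      constructor
      · rintro ⟨ξ, h, rfl⟩; exact h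
      · intro h
        exact ⟨⟨z, fun h' => h (h'.imp id (fun h => hBA h))⟩, h, rfl⟩
    rw [← IsInducing.subtypeVal.isPreconnected_image, himg]
    exact hN'c
  · refine ⟨⟨ζ 0, hζN 0⟩, ?_, hs0⟩
    have : ((c + Complex.exp (ζ 0) : ℂ) : OnePoint ℂ) ∈ (Z ∪ A)ᶜ := by
      rw [hζ' 0]; simpa using hx
    exact this
  · refine ⟨⟨ζ 1, hζN 1⟩, ?_, hy1⟩
    have : ((c + Complex.exp (ζ 1) : ℂ) : OnePoint ℂ) ∈ (Z ∪ A)ᶜ := by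
      rw [hζ' 1]; simpa using hy
    exact this
  · rintro _ ⟨ξ, h, rfl⟩
    rw [hs']
    exact h

end

section
open Set Topology

theorem onePoint_homeo : Nonempty (OnePoint ℂ ≃ₜ Metric.sphere (0 : EuclideanSpace ℝ (Fin 3)) 1) :=
  ⟨onePointEquivSphereOfFinrankEq (V := ℂ) (by simp [Complex.finrank_real_complex])⟩

instance onePoint_lpc : LocallyPathConnectedSpace (OnePoint ℂ) := by
  obtain ⟨h⟩ := onePoint_homeo
  haveI : Fact (Module.finrank ℝ (EuclideanSpace ℝ (Fin 3)) = 2 + 1) := ⟨by simp⟩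
  haveI : LocallyPathConnectedSpace (Metric.sphere (0 : EuclideanSpace ℝ (Fin 3)) 1) :=
    ChartedSpace.locallyPathConnectedSpace (EuclideanSpace ℝ (Fin 2)) _
  exact h.symm.isQuotientMap.locallyPathConnectedSpace

/-- complement of a closed component -/
theorem compl_comp_closed {X : Type*} [TopologicalSpace X] [PreconnectedSpace X] (U A : Set X)
    (hU : IsPreconnected U) (x : X) (hA : A = connectedComponentIn Uᶜ x)
    (hx : x ∈ Uᶜ) (hcl : IsClosed A) : IsPreconnected Aᶜ := by
  have hAU : A ⊆ Uᶜ := hA ▸ connectedComponentIn_subset _ _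
  have hUA : U ⊆ Aᶜ := subset_compl_comm.1 hAU
  have hAc : IsPreconnected A := hA ▸ isPreconnected_connectedComponentIn
  have hxA : x ∈ A := hA ▸ mem_connectedComponentIn hx
  rw [isPreconnected_iff_subset_of_disjoint]
  have key : ∀ u v : Set X, IsOpen u → IsOpen v → Aᶜ ⊆ u ∪ v → Aᶜ ∩ (u ∩ v) = ∅ → U ⊆ u →
      Aᶜ ⊆ u := by
    intro u v hu hv huv hd hUu
    set P := Aᶜ ∩ u
    set Q := Aᶜ ∩ v
    have hPo : IsOpen P := hcl.isOpen_compl.inter hu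
    have hQo : IsOpen Q := hcl.isOpen_compl.inter hv
    have hPQ : ∀ z, z ∈ P → z ∈ Q → False := fun z h1 h2 =>
      (eq_empty_iff_forall_notMem.1 hd z) ⟨h1.1, h1.2, h2.2⟩
    have hcov : ∀ z, z ∈ A ∨ z ∈ P ∨ z ∈ Q := by
      intro z
      by_cases h : z ∈ A
      · exact Or.inl h
      · rcases huv h with h' | h'
        · exact Or.inr (Or.inl ⟨h, h'⟩)
        · exact Or.inr (Or.inr ⟨h, h'⟩)
    have hAP : A ⊆ Pᶜ := fun z h1 h2 => h2.1 h1
    have hconn : IsPreconnected Pᶜ := by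
      rw [isPreconnected_closed_iff]
      have sub : ∀ r t, IsClosed r → IsClosed t → Pᶜ ⊆ r ∪ t → Pᶜ ∩ (r ∩ t) = ∅ → A ⊆ r →
          Pᶜ ∩ t = ∅ := by
        intro r t hr ht hrt hdd hAr
        have hTc : IsClosed (Pᶜ ∩ t) := hPo.isClosed_compl.inter ht
        have hTe : Pᶜ ∩ t = Q ∩ rᶜ := by
          ext z
          constructor
          · intro h
            have hzr : z ∉ r := fun hr => (eq_empty_iff_forall_notMem.1 hdd z) ⟨h.1, hr, h.2⟩
            rcases hcov z with h1 | h1 | h1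
            · exact absurd (hAr h1) hzr
            · exact absurd h1 h.1
            · exact ⟨h1, hzr⟩
          · intro h
            have hzP : z ∈ Pᶜ := fun h' => hPQ z h' h.1
            exact ⟨hzP, (hrt hzP).resolve_left h.2⟩
        have hTo : IsOpen (Pᶜ ∩ t) := hTe ▸ hQo.inter hr.isOpen_compl
        rcases isClopen_iff.1 ⟨hTc, hTo⟩ with h | h
        · exact h
        · exfalso
          have : x ∈ Pᶜ ∩ t := h ▸ mem_univ x
          rw [hTe] at this
          exact this.1.1 hxA
      intro r t hr ht hrt h1 h2
      by_contra hne
      rw [not_nonempty_iff_eq_empty] at hne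
      have := (isPreconnected_iff_subset_of_disjoint_closed.1 hAc) r t hr ht (hAP.trans hrt)
        (subset_eq_empty (inter_subset_inter_left _ hAP) hne)
      rcases this with h | h
      · rw [sub r t hr ht hrt hne h] at h2
        exact not_nonempty_empty h2
      · rw [sub t r ht hr (by rwa [union_comm]) (by rwa [inter_comm t r]) h] at h1
        exact not_nonempty_empty h1
    have hPU : Pᶜ ⊆ Uᶜ := fun z hz hzU => hz ⟨hUA hzU, hUu hzU⟩
    have : Pᶜ ⊆ A := hA ▸ hconn.subset_connectedComponentIn (hAP hxA) hPU
    intro z hz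
    by_contra hzu
    exact hz (this fun h => hzu h.2)
  intro u v hu hv huv hd
  rcases (isPreconnected_iff_subset_of_disjoint.1 hU) u v hu hv (hUA.trans huv)
    (subset_eq_empty (inter_subset_inter_left _ hUA) hd) with h | h
  · exact Or.inl (key u v hu hv huv hd h)
  · exact Or.inr (key v u hv hu (by rwa [union_comm]) (by rwa [inter_comm v u]) h)

/-- complement of an open component -/
theorem compl_comp_open {X : Type*} [TopologicalSpace X] [PreconnectedSpace X] (U A : Set X)
    (hU : IsPreconnected U) (x : X) (hA : A = connectedComponentIn Uᶜ x)
    (hx : x ∈ Uᶜ) (hcl : IsOpen A) : IsPreconnected Aᶜ := by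
  have hAU : A ⊆ Uᶜ := hA ▸ connectedComponentIn_subset _ _
  have hUA : U ⊆ Aᶜ := subset_compl_comm.1 hAU
  have hAc : IsPreconnected A := hA ▸ isPreconnected_connectedComponentIn
  have hxA : x ∈ A := hA ▸ mem_connectedComponentIn hx
  rw [isPreconnected_iff_subset_of_disjoint_closed]
  have key : ∀ u v : Set X, IsClosed u → IsClosed v → Aᶜ ⊆ u ∪ v → Aᶜ ∩ (u ∩ v) = ∅ → U ⊆ u →
      Aᶜ ⊆ u := by
    intro u v hu hv huv hd hUu
    set P := Aᶜ ∩ u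
    set Q := Aᶜ ∩ v
    have hPo : IsClosed P := hcl.isClosed_compl.inter hu
    have hQo : IsClosed Q := hcl.isClosed_compl.inter hv
    have hPQ : ∀ z, z ∈ P → z ∈ Q → False := fun z h1 h2 =>
      (eq_empty_iff_forall_notMem.1 hd z) ⟨h1.1, h1.2, h2.2⟩
    have hcov : ∀ z, z ∈ A ∨ z ∈ P ∨ z ∈ Q := by
      intro z
      by_cases h : z ∈ A
      · exact Or.inl h
      · rcases huv h with h' | h'
        · exact Or.inr (Or.inl ⟨h, h'⟩)
        · exact Or.inr (Or.inr ⟨h, h'⟩)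
    have hAP : A ⊆ Pᶜ := fun z h1 h2 => h2.1 h1
    have hconn : IsPreconnected Pᶜ := by
      have sub : ∀ r t, IsOpen r → IsOpen t → Pᶜ ⊆ r ∪ t → Pᶜ ∩ (r ∩ t) = ∅ → A ⊆ r →
          Pᶜ ∩ t = ∅ := by
        intro r t hr ht hrt hdd hAr
        have hTc : IsOpen (Pᶜ ∩ t) := hPo.isOpen_compl.inter ht
        have hTe : Pᶜ ∩ t = Q ∩ rᶜ := by
          ext z
          constructor
          · intro h
            have hzr : z ∉ r := fun hr => (eq_empty_iff_forall_notMem.1 hdd z) ⟨h.1, hr, h.2⟩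
            rcases hcov z with h1 | h1 | h1
            · exact absurd (hAr h1) hzr
            · exact absurd h1 h.1
            · exact ⟨h1, hzr⟩
          · intro h
            have hzP : z ∈ Pᶜ := fun h' => hPQ z h' h.1
            exact ⟨hzP, (hrt hzP).resolve_left h.2⟩
        have hTo : IsClosed (Pᶜ ∩ t) := hTe ▸ hQo.inter hr.isClosed_compl
        rcases isClopen_iff.1 ⟨hTo, hTc⟩ with h | h
        · exact h
        · exfalso
          have : x ∈ Pᶜ ∩ t := h ▸ mem_univ x
          rw [hTe] at this
          exact this.1.1 hxA
      intro r t hr ht hrt h1 h2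
      by_contra hne
      rw [not_nonempty_iff_eq_empty] at hne
      have := (isPreconnected_iff_subset_of_disjoint.1 hAc) r t hr ht (hAP.trans hrt)
        (subset_eq_empty (inter_subset_inter_left _ hAP) hne)
      rcases this with h | h
      · rw [sub r t hr ht hrt hne h] at h2
        exact not_nonempty_empty h2
      · rw [sub t r ht hr (by rwa [union_comm]) (by rwa [inter_comm t r]) h] at h1
        exact not_nonempty_empty h1
    have hPU : Pᶜ ⊆ Uᶜ := fun z hz hzU => hz ⟨hUA hzU, hUu hzU⟩
    have : Pᶜ ⊆ A := hA ▸ hconn.subset_connectedComponentIn (hAP hxA) hPU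
    intro z hz
    by_contra hzu
    exact hz (this fun h => hzu h.2)
  intro u v hu hv huv hd
  rcases (isPreconnected_iff_subset_of_disjoint_closed.1 hU) u v hu hv (hUA.trans huv)
    (subset_eq_empty (inter_subset_inter_left _ hUA) hd) with h | h
  · exact Or.inl (key u v hu hv huv hd h)
  · exact Or.inr (key v u hv hu (by rwa [union_comm]) (by rwa [inter_comm v u]) h)

theorem exists_conn_hull (Ω F : Set (OnePoint ℂ)) (hΩ : IsOpen Ω) (hΩc : IsPreconnected Ω)
    (hF : IsClosed F) (hFΩ : F ⊆ Ω) (x0 : OnePoint ℂ) (hx0 : x0 ∈ F) :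
    ∃ Z, IsClosed Z ∧ IsPreconnected Z ∧ F ⊆ Z ∧ Z ⊆ Ω := by
  have hpc : IsPathConnected Ω := hΩ.isConnected_iff_isPathConnected.1 ⟨⟨x0, hFΩ hx0⟩, hΩc⟩
  have hloc : ∀ x ∈ F, ∃ W : Set (OnePoint ℂ), IsOpen W ∧ x ∈ W ∧ IsPreconnected W ∧
      closure W ⊆ Ω := by
    intro x hx
    obtain ⟨T, hT, hTc, hTΩ⟩ := exists_mem_nhds_isClosed_subset (hΩ.mem_nhds (hFΩ hx))
    refine ⟨connectedComponentIn (interior T) x, isOpen_interior.connectedComponentIn,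
      mem_connectedComponentIn (mem_interior_iff_mem_nhds.2 hT),
      isPreconnected_connectedComponentIn, ?_⟩
    exact (closure_minimal ((connectedComponentIn_subset _ _).trans interior_subset) hTc).trans hTΩ
  choose! W hWo hxW hWc hWΩ using hloc
  obtain ⟨t, htF, ht⟩ := hF.isCompact.elim_nhds_subcover W (fun x hx => (hWo x hx).mem_nhds (hxW x hx))
  have hpath : ∀ x ∈ F, ∃ γ : Path x0 x, ∀ s, γ s ∈ Ω := fun x hx =>
    hpc.joinedIn x0 (hFΩ hx0) x (hFΩ hx)
  have hpath' : ∀ x ∈ F, ∃ R : Set (OnePoint ℂ), IsClosed R ∧ IsPreconnected R ∧ x0 ∈ R ∧ x ∈ R ∧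
      R ⊆ Ω := by
    intro x hx
    obtain ⟨γ, hγ⟩ := hpath x hx
    exact ⟨range γ, (isCompact_range γ.continuous).isClosed, isPreconnected_range γ.continuous,
      ⟨0, γ.source⟩, ⟨1, γ.target⟩, by rintro _ ⟨s, rfl⟩; exact hγ s⟩
  choose! R hRc hRp hR0 hRx hRΩ using hpath'
  refine ⟨⋃ x ∈ t, (R x ∪ closure (W x)), ?_, ?_, ?_, ?_⟩
  · exact t.finite_toSet.isClosed_biUnion fun x hx => (hRc x (htF x hx)).union isClosed_closure
  · apply isPreconnected_of_forall x0
    intro y hy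
    simp only [mem_iUnion, exists_prop] at hy
    obtain ⟨x, hx, hy⟩ := hy
    refine ⟨R x ∪ closure (W x), fun z hz => mem_biUnion hx hz, Or.inl (hR0 x (htF x hx)), hy, ?_⟩
    exact (hRp x (htF x hx)).union x (hRx x (htF x hx)) (subset_closure (hxW x (htF x hx)))
      (hWc x (htF x hx)).closure
  · intro z hz
    obtain ⟨x, hx, hz⟩ := mem_iUnion₂.1 (ht hz)
    exact mem_biUnion hx (Or.inr (subset_closure hz))
  · intro z hz
    obtain ⟨x, hx, hz⟩ := mem_iUnion₂.1 hz
    rcases hz with h | h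
    · exact hRΩ x (htF x hx) h
    · exact hWΩ x (htF x hx) h

end

section
open Set Topology

theorem coe_mem_sph {s : Set ℂ} {z : ℂ} : (z : OnePoint ℂ) ∈ sph s ↔ z ∈ s := by
  constructor
  · rintro ⟨w, hw, h⟩
    have := OnePoint.coe_injective h
    exact this ▸ hw
  · intro h; exact ⟨z, h, rfl⟩

theorem infty_notMem_sph (s : Set ℂ) : OnePoint.infty ∉ sph s := by
  rintro ⟨w, hw, h⟩
  exact OnePoint.coe_ne_infty w h

theorem isOpen_sph {s : Set ℂ} (h : IsOpen s) : IsOpen (sph s) := OnePoint.isOpen_image_coe.2 h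

theorem isPreconnected_sph {s : Set ℂ} (h : IsPreconnected s) : IsPreconnected (sph s) :=
  h.image _ OnePoint.continuous_coe.continuousOn

theorem closed_compIn {X : Type*} [TopologicalSpace X] {F : Set X} (hF : IsClosed F) (x : X) :
    IsClosed (connectedComponentIn F x) := by
  by_cases hx : x ∈ F
  · have h1 : closure (connectedComponentIn F x) ⊆ F :=
      closure_minimal (connectedComponentIn_subset _ _) hF
    have := (isPreconnected_connectedComponentIn (F := F) (x := x)).closure.subset_connectedComponentIn
      (subset_closure (mem_connectedComponentIn hx)) h1
    exact isClosed_of_closure_subset this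
  · rw [connectedComponentIn_eq_empty hx]; exact isClosed_empty

theorem preconn_compl_coe (b : ℂ) : IsPreconnected ({(b : OnePoint ℂ)}ᶜ : Set (OnePoint ℂ)) := by
  have h1 : IsPreconnected ({b}ᶜ : Set ℂ) :=
    (isConnected_compl_singleton_of_one_lt_rank (by rw [Complex.rank_real_complex]; norm_num) b).2
  have h2 := h1.image (fun z : ℂ => (z : OnePoint ℂ)) OnePoint.continuous_coe.continuousOn
  refine h2.subset_closure ?_ ?_
  · rintro _ ⟨z, hz, rfl⟩ h
    exact hz (OnePoint.coe_injective h)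
  · have : Dense ((fun z : ℂ => (z : OnePoint ℂ)) '' {b}ᶜ) :=
      OnePoint.denseRange_coe.dense_image OnePoint.continuous_coe (dense_compl_singleton b)
    rw [this.closure_eq]
    exact subset_univ _

structure SphData (U V CV : Set ℂ) (A B Z : Set (OnePoint ℂ)) (c : ℂ) : Prop where
  hA : IsClosed A
  hB : IsClosed B
  hZ : IsClosed Z
  hAc : IsPreconnected Aᶜ
  hBc : IsPreconnected Bᶜ
  hZc : IsPreconnected Zᶜ
  hBp : IsPreconnected B
  hZp : IsPreconnected Z
  hBA : B ⊆ A
  hd : Disjoint Z A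
  hcs : ((c : OnePoint ℂ) ∈ B ∧ OnePoint.infty ∈ Z) ∨
      (OnePoint.infty ∈ B ∧ (c : OnePoint ℂ) ∈ Z)
  hCV : sph CV ⊆ Z
  hU : (Z ∪ A)ᶜ ⊆ sph U
  hV : (Z ∪ B)ᶜ ⊆ sph V
  hb : B ⊆ (sph V)ᶜ ∨ ∃ b ∈ V, B = {(b : OnePoint ℂ)}

theorem exists_data (U V CV : Set ℂ)
    (hUne : U.Nonempty) (hUopen : IsOpen U) (hUconn : IsPreconnected U)
    (hVopen : IsOpen V) (hVconn : IsPreconnected V) (hUV : U ⊆ V)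
    (hfinU : {C : Set (OnePoint ℂ) |
      ∃ x ∈ (sph U)ᶜ, C = connectedComponentIn (sph U)ᶜ x}.Finite)
    (hcompUV : ∀ x ∈ (sph U)ᶜ, ∀ y₁ ∈ (sph V)ᶜ, ∀ y₂ ∈ (sph V)ᶜ,
      connectedComponentIn (sph V)ᶜ y₁ ⊆ connectedComponentIn (sph U)ᶜ x →
      connectedComponentIn (sph V)ᶜ y₂ ⊆ connectedComponentIn (sph U)ᶜ x →
      connectedComponentIn (sph V)ᶜ y₁ = connectedComponentIn (sph V)ᶜ y₂)
    (hCV : IsCompact CV) (hCVU : CV ⊆ U) (x : OnePoint ℂ) (hx : x ∈ (sph U)ᶜ) :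
    ∃ B Z c, SphData U V CV (connectedComponentIn (sph U)ᶜ x) B Z c := by
  obtain ⟨u0, hu0⟩ := hUne
  have hUcl : IsClosed (sph U)ᶜ := (isOpen_sph hUopen).isClosed_compl
  have hVcl : IsClosed (sph V)ᶜ := (isOpen_sph hVopen).isClosed_compl
  have hVU : (sph V)ᶜ ⊆ (sph U)ᶜ := compl_subset_compl.2 (image_mono hUV)
  set A := connectedComponentIn (sph U)ᶜ x with hAdef
  have hxA : x ∈ A := mem_connectedComponentIn hx
  have hAU : A ⊆ (sph U)ᶜ := connectedComponentIn_subset _ _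
  have hAcl : IsClosed A := closed_compIn hUcl x
  have hAc : IsPreconnected Aᶜ :=
    compl_comp_closed (sph U) A (isPreconnected_sph hUconn) x hAdef hx hAcl
  have hrest : IsClosed ((sph U)ᶜ \ A) := by
    have : (sph U)ᶜ \ A = ⋃₀ {C | C ∈ {C : Set (OnePoint ℂ) |
      ∃ x ∈ (sph U)ᶜ, C = connectedComponentIn (sph U)ᶜ x} ∧ C ≠ A} := by
      ext y
      constructor
      · rintro ⟨hy, hyA⟩
        refine ⟨connectedComponentIn (sph U)ᶜ y, ⟨⟨y, hy, rfl⟩, ?_⟩, mem_connectedComponentIn hy⟩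
        intro h
        exact hyA (h ▸ mem_connectedComponentIn hy)
      · rintro ⟨C, ⟨⟨z, hz, rfl⟩, hne⟩, hy⟩
        refine ⟨connectedComponentIn_subset _ _ hy, fun hyA => hne ?_⟩
        rw [connectedComponentIn_eq hy, hAdef, connectedComponentIn_eq hyA]
    rw [this, sUnion_eq_biUnion]
    refine Set.Finite.isClosed_biUnion (hfinU.subset fun C h => h.1) ?_
    rintro C ⟨⟨z, hz, rfl⟩, -⟩
    exact closed_compIn hUcl z
  have hCVcl : IsClosed (sph CV) := (hCV.image OnePoint.continuous_coe).isClosed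
  set F := (sph CV ∪ {(u0 : OnePoint ℂ)}) ∪ ((sph U)ᶜ \ A) with hFdef
  have hFcl : IsClosed F := (hCVcl.union isClosed_singleton).union hrest
  have hFA : F ⊆ Aᶜ := by
    rintro y ((hy | hy) | hy) hyA
    · exact hAU hyA (image_mono hCVU hy)
    · rw [mem_singleton_iff] at hy
      exact hAU hyA (hy ▸ coe_mem_sph.2 hu0)
    · exact hy.2 hyA
  obtain ⟨Z1, hZ1cl, hZ1c, hFZ1, hZ1A⟩ := exists_conn_hull Aᶜ F hAcl.isOpen_compl hAc hFcl hFA u0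
    (Or.inl (Or.inr rfl))
  have hAZ1 : A ⊆ Z1ᶜ := subset_compl_comm.1 hZ1A
  set O := connectedComponentIn Z1ᶜ x with hO
  have hOo : IsOpen O := hZ1cl.isOpen_compl.connectedComponentIn
  have hAO : A ⊆ O := isPreconnected_connectedComponentIn.subset_connectedComponentIn hxA hAZ1
  have hZ1O : Z1 ⊆ Oᶜ := subset_compl_comm.1 (connectedComponentIn_subset _ _)
  have hOc : IsPreconnected Oᶜ := compl_comp_open Z1 O hZ1c x hO (hAZ1 hxA) hOo
  have hFO : F ⊆ Oᶜ := hFZ1.trans hZ1O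
  -- B
  have hBex : ∃ B : Set (OnePoint ℂ), IsClosed B ∧ IsPreconnected Bᶜ ∧ IsPreconnected B ∧ B ⊆ A ∧
      A ∩ (sph V)ᶜ ⊆ B ∧ B.Nonempty ∧ (B ⊆ (sph V)ᶜ ∨ ∃ b ∈ V, B = {(b : OnePoint ℂ)}) := by
    by_cases hT : (A ∩ (sph V)ᶜ).Nonempty
    · obtain ⟨y, hyA, hyV⟩ := hT
      have hsub : ∀ y, y ∈ A → y ∈ (sph V)ᶜ → connectedComponentIn (sph V)ᶜ y ⊆ A := by
        intro y hyA hyV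
        rw [hAdef, connectedComponentIn_eq hyA]
        exact connectedComponentIn_mono y hVU
      refine ⟨connectedComponentIn (sph V)ᶜ y, closed_compIn hVcl y,
        compl_comp_closed (sph V) _ (isPreconnected_sph hVconn) y rfl hyV (closed_compIn hVcl y),
        isPreconnected_connectedComponentIn, hsub y hyA hyV, ?_, ⟨y, mem_connectedComponentIn hyV⟩,
        Or.inl (connectedComponentIn_subset _ _)⟩
      rintro y' ⟨hy'A, hy'V⟩
      rw [hcompUV x hx y hyV y' hy'V (hsub y hyA hyV) (hsub y' hy'A hy'V)]
      exact mem_connectedComponentIn hy'V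
    · rw [not_nonempty_iff_eq_empty] at hT
      have hxV : x ∈ sph V := by
        by_contra h
        exact (eq_empty_iff_forall_notMem.1 hT x) ⟨hxA, h⟩
      obtain ⟨b, hb, rfl⟩ := hxV
      refine ⟨{(b : OnePoint ℂ)}, isClosed_singleton, preconn_compl_coe b, isPreconnected_singleton,
        singleton_subset_iff.2 hxA, by rw [hT]; exact empty_subset _, singleton_nonempty _,
        Or.inr ⟨b, hb, rfl⟩⟩
  obtain ⟨B, hBcl, hBc, hBp, hBA, hTB, ⟨y, hyB⟩, hb⟩ := hBex
  have hcs : ∃ c : ℂ, ((c : OnePoint ℂ) ∈ B ∧ OnePoint.infty ∈ Oᶜ) ∨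
      (OnePoint.infty ∈ B ∧ (c : OnePoint ℂ) ∈ Oᶜ) := by
    by_cases hinf : OnePoint.infty ∈ A
    · exact ⟨u0, Or.inr ⟨hTB ⟨hinf, infty_notMem_sph V⟩, hFO (Or.inl (Or.inr rfl))⟩⟩
    · have : y ≠ OnePoint.infty := fun h => hinf (h ▸ hBA hyB)
      obtain ⟨c, rfl⟩ := OnePoint.ne_infty_iff_exists.1 this
      exact ⟨c, Or.inl ⟨hyB, hFO (Or.inr ⟨infty_notMem_sph U, hinf⟩)⟩⟩
  obtain ⟨c, hc⟩ := hcs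
  refine ⟨B, Oᶜ, c, hAcl, hBcl, hOo.isClosed_compl, hAc, hBc, ?_, hBp, hOc, hBA, ?_, hc, ?_, ?_, ?_,
    hb⟩
  · rw [compl_compl]; exact isPreconnected_connectedComponentIn
  · rw [disjoint_left]; exact fun z h1 h2 => h1 (hAO h2)
  · exact fun z hz => hFO (Or.inl (Or.inl hz))
  · intro z hz
    by_contra h
    apply hz
    by_cases hzA : z ∈ A
    · exact Or.inr hzA
    · exact Or.inl (hFO (Or.inr ⟨h, hzA⟩))
  · intro z hz
    by_contra h
    apply hz
    by_cases hzA : z ∈ A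
    · exact Or.inr (hTB ⟨hzA, h⟩)
    · exact Or.inl (hFO (Or.inr ⟨hVU h, hzA⟩))

end

section
open Set Topology

theorem key_top {E : Type*} [TopologicalSpace E] [LocallyPathConnectedSpace E] (p : E → ℂ)
    (hpc : Continuous p) (U V CV : Set ℂ) (hpV : ∀ e, p e ∈ V)
    (hUne : U.Nonempty) (hUopen : IsOpen U) (hUconn : IsPreconnected U)
    (hVopen : IsOpen V) (hVconn : IsPreconnected V) (hUV : U ⊆ V)
    (hfinU : {C : Set (OnePoint ℂ) |
      ∃ x ∈ (sph U)ᶜ, C = connectedComponentIn (sph U)ᶜ x}.Finite)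
    (hcompUV : ∀ x ∈ (sph U)ᶜ, ∀ y₁ ∈ (sph V)ᶜ, ∀ y₂ ∈ (sph V)ᶜ,
      connectedComponentIn (sph V)ᶜ y₁ ⊆ connectedComponentIn (sph U)ᶜ x →
      connectedComponentIn (sph V)ᶜ y₂ ⊆ connectedComponentIn (sph U)ᶜ x →
      connectedComponentIn (sph V)ᶜ y₁ = connectedComponentIn (sph V)ᶜ y₂)
    (hCV : IsCompact CV) (hCVU : CV ⊆ U)
    (hcov : IsCoveringMapOn p (V \ CV))
    (hrem : ∀ T : Set ℂ, T.Finite → T ⊆ V → IsPreconnected {e | p e ∉ T}) :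
    IsPreconnected (p ⁻¹' U) := by
  set comps : Set (Set (OnePoint ℂ)) := {C : Set (OnePoint ℂ) |
      ∃ x ∈ (sph U)ᶜ, C = connectedComponentIn (sph U)ᶜ x} with hcomps
  have hdata : ∀ C ∈ comps, ∃ B Z c, SphData U V CV C B Z c := by
    rintro C ⟨x, hx, rfl⟩
    exact exists_data U V CV hUne hUopen hUconn hVopen hVconn hUV hfinU hcompUV hCV hCVU x hx
  choose! B Z c hS using hdata
  have hCU : ∀ C ∈ comps, C ⊆ (sph U)ᶜ := by
    rintro C ⟨x, hx, rfl⟩; exact connectedComponentIn_subset _ _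
  have hCC : ∀ C ∈ comps, ∀ C' ∈ comps, ∀ s, s ∈ C → s ∈ C' → C = C' := by
    rintro C ⟨x, hx, rfl⟩ C' ⟨x', hx', rfl⟩ s h h'
    rw [connectedComponentIn_eq h, connectedComponentIn_eq h']
  set T : Set ℂ := ⋃ C ∈ comps, {b : ℂ | b ∈ V ∧ B C = {(b : OnePoint ℂ)}} with hT
  have hTfin : T.Finite := by
    refine hfinU.biUnion fun C _ => Set.Subsingleton.finite ?_
    rintro b ⟨-, hb⟩ b' ⟨-, hb'⟩
    have := hb.symm.trans hb'
    exact OnePoint.coe_injective (singleton_eq_singleton_iff.1 this)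
  have hTV : T ⊆ V := by
    intro b hb
    obtain ⟨C, hC, hb⟩ := mem_iUnion₂.1 hb
    exact hb.1
  have hTU : ∀ z ∈ U, z ∉ T := by
    intro z hz hzT
    obtain ⟨C, hC, hb⟩ := mem_iUnion₂.1 hzT
    have : (z : OnePoint ℂ) ∈ B C := by rw [hb.2]; rfl
    exact hCU C hC ((hS C hC).hBA this) (coe_mem_sph.2 hz)
  have hE := hrem T hTfin hTV
  -- points of E° are not in B
  have hEB : ∀ e, p e ∉ T → ∀ C ∈ comps, (p e : OnePoint ℂ) ∉ B C := by
    intro e he C hC h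
    rcases (hS C hC).hb with h1 | ⟨b, hb, h1⟩
    · exact h1 h (coe_mem_sph.2 (hpV e))
    · rw [h1] at h
      have := OnePoint.coe_injective h
      exact he (mem_iUnion₂.2 ⟨C, hC, this ▸ hb, this ▸ h1⟩)
  let D : Set (OnePoint ℂ) → Set ℂ := fun C => {z : ℂ | (z : OnePoint ℂ) ∈ (Z C ∪ B C)ᶜ}
  let G : Set (OnePoint ℂ) → Set E := fun C => p ⁻¹' D C
  have hGo : ∀ C ∈ comps, IsOpen (G C) := fun C hC =>
    (((hS C hC).hZ.union (hS C hC).hB).isOpen_compl.preimage OnePoint.continuous_coe).preimage hpc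
  have hcovD : ∀ C ∈ comps, IsCoveringMapOn p (D C) := by
    intro C hC
    refine hcov.mono fun z hz => ⟨coe_mem_sph.1 ((hS C hC).hV hz), fun h => hz (Or.inl ?_)⟩
    exact (hS C hC).hCV (coe_mem_sph.2 h)
  intro u v hu hv huv hXne hYne
  by_contra hdis
  rw [not_nonempty_iff_eq_empty, eq_empty_iff_forall_notMem] at hdis
  obtain ⟨x0, hx0U, hx0⟩ := hXne
  obtain ⟨y0, hy0U, hy0⟩ := hYne
  have hGA : ∀ C ∈ comps, ∀ e ∈ G C, p e ∈ U → (p e : OnePoint ℂ) ∈ (Z C ∪ C)ᶜ := by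
    rintro C hC e heG heU (h | h)
    · exact heG (Or.inl h)
    · exact hCU C hC h (coe_mem_sph.2 heU)
  have sec : ∀ C ∈ comps, ∀ e e', p e ∈ U → p e' ∈ U → JoinedIn (G C) e e' → e ∈ u → e' ∈ v →
      False := by
    intro C hC e e' he he' hj heu hev
    have S := hS C hC
    obtain ⟨SS, hSSc, h1, h2, h3⟩ := section_lemma p (c C) C (B C) (Z C) S.hA S.hB S.hZ S.hAc S.hBc
      S.hZc S.hBp S.hZp S.hBA S.hd S.hcs (hcovD C hC) e e' (hGA C hC e hj.source_mem he)
      (hGA C hC e' hj.target_mem he') hj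
    have hSSU : SS ⊆ p ⁻¹' U := fun z hz => coe_mem_sph.1 (S.hU (h3 z hz))
    obtain ⟨z, hz, hz'⟩ := hSSc u v hu hv (hSSU.trans huv) ⟨e, h1, heu⟩ ⟨e', h2, hev⟩
    exact hdis z ⟨hSSU hz, hz'⟩
  let ext : Set E → Set E := fun w => (p ⁻¹' U ∩ w) ∪
    ⋃ C ∈ comps, ⋃ x ∈ p ⁻¹' U ∩ w, pathComponentIn (G C) x
  have hext_open : ∀ w, IsOpen w → IsOpen (ext w) := by
    intro w hw
    refine ((hUopen.preimage hpc).inter hw).union ?_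
    exact isOpen_biUnion fun C hC => isOpen_biUnion fun x hx => (hGo C hC).pathComponentIn x
  have hcover : {e | p e ∉ T} ⊆ ext u ∪ ext v := by
    intro e he
    by_cases heU : p e ∈ U
    · rcases huv heU with h | h
      · exact Or.inl (Or.inl ⟨heU, h⟩)
      · exact Or.inr (Or.inl ⟨heU, h⟩)
    have hes : (p e : OnePoint ℂ) ∈ (sph U)ᶜ := fun h => heU (coe_mem_sph.1 h)
    obtain ⟨C, hC, heC⟩ : ∃ C ∈ comps, (p e : OnePoint ℂ) ∈ C :=
      ⟨_, ⟨_, hes, rfl⟩, mem_connectedComponentIn hes⟩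
    have S := hS C hC
    have heG : e ∈ G C := by
      rintro (h | h)
      · exact disjoint_left.1 S.hd h heC
      · exact hEB e he C hC h
    by_cases hQ : ∃ x, x ∈ pathComponentIn (G C) e ∧ p x ∈ U
    · obtain ⟨x, hxQ, hxU⟩ := hQ
      have hj : JoinedIn (G C) x e := JoinedIn.symm hxQ
      rcases huv hxU with h | h
      · exact Or.inl (Or.inr (mem_biUnion hC (mem_biUnion ⟨hxU, h⟩ hj)))
      · exact Or.inr (Or.inr (mem_biUnion hC (mem_biUnion ⟨hxU, h⟩ hj)))
    exfalso
    push Not at hQ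
    have hQC : ∀ x ∈ pathComponentIn (G C) e, (p x : OnePoint ℂ) ∈ C := by
      intro x hx
      have hxG : x ∈ G C := JoinedIn.target_mem hx
      by_contra h
      apply hQ x hx
      apply coe_mem_sph.1 (S.hU _)
      rintro (h' | h')
      · exact hxG (Or.inl h')
      · exact h h'
    set Q' : Set E := (⋃ x ∈ G C \ pathComponentIn (G C) e, pathComponentIn (G C) x) ∪
      {x | (p x : OnePoint ℂ) ∈ Cᶜ} with hQ'
    have hQ'o : IsOpen Q' := (isOpen_biUnion fun x _ => (hGo C hC).pathComponentIn x).union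
      ((S.hA.isOpen_compl.preimage OnePoint.continuous_coe).preimage hpc)
    obtain ⟨z, -, hz1, hz2⟩ := hE (pathComponentIn (G C) e) Q' ((hGo C hC).pathComponentIn e) hQ'o
      (by
        intro x hx
        by_cases hxQ : x ∈ pathComponentIn (G C) e
        · exact Or.inl hxQ
        right
        by_cases hxG : x ∈ G C
        · exact Or.inl (mem_biUnion ⟨hxG, hxQ⟩ (mem_pathComponentIn_self hxG))
        · right
          intro hxC
          apply hxG
          rintro (h | h)
          · exact disjoint_left.1 S.hd h hxC
          · exact hEB x hx C hC h)
      ⟨e, he, mem_pathComponentIn_self heG⟩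
      ⟨x0, hTU _ hx0U, Or.inr fun h => hCU C hC h (coe_mem_sph.2 hx0U)⟩
    rcases hz2 with h | h
    · obtain ⟨x, hx, hzx⟩ := mem_iUnion₂.1 h
      apply hx.2
      exact JoinedIn.trans hz1 (JoinedIn.symm hzx)
    · exact h (hQC z hz1)
  obtain ⟨e, he, he1, he2⟩ := hE (ext u) (ext v) (hext_open u hu) (hext_open v hv) hcover
    ⟨x0, hTU _ hx0U, Or.inl ⟨hx0U, hx0⟩⟩ ⟨y0, hTU _ hy0U, Or.inl ⟨hy0U, hy0⟩⟩
  rcases he1 with h1 | h1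
  · rcases he2 with h2 | h2
    · exact hdis e ⟨h1.1, h1.2, h2.2⟩
    · obtain ⟨C, hC, h2⟩ := mem_iUnion₂.1 h2
      obtain ⟨y, hy, h2⟩ := mem_iUnion₂.1 h2
      exact sec C hC e y h1.1 hy.1 (JoinedIn.symm h2) h1.2 hy.2
  · obtain ⟨C, hC, h1⟩ := mem_iUnion₂.1 h1
    obtain ⟨x, hx, h1⟩ := mem_iUnion₂.1 h1
    rcases he2 with h2 | h2
    · exact sec C hC x e hx.1 h2.1 h1 hx.2 h2.2
    · obtain ⟨C', hC', h2⟩ := mem_iUnion₂.1 h2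
      obtain ⟨y, hy, h2⟩ := mem_iUnion₂.1 h2
      by_cases heU : p e ∈ U
      · rcases huv heU with h | h
        · exact sec C' hC' e y heU hy.1 (JoinedIn.symm h2) h hy.2
        · exact sec C hC x e hx.1 heU h1 hx.2 h
      · have hin : ∀ C ∈ comps, e ∈ G C → (p e : OnePoint ℂ) ∈ C := by
          intro C hC heG
          by_contra h
          apply heU
          apply coe_mem_sph.1 ((hS C hC).hU _)
          rintro (h' | h')
          · exact heG (Or.inl h')
          · exact h h'
        have := hCC C hC C' hC' _ (hin C hC (JoinedIn.target_mem h1))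
          (hin C' hC' (JoinedIn.target_mem h2))
        subst this
        exact sec C hC x y hx.1 hy.1 (JoinedIn.trans h1 (JoinedIn.symm h2)) hx.2 hy.2

end

section
open Set Topology

theorem punct_ball (a : ℂ) (r : ℝ) (hr : 0 < r) : IsPreconnected (Metric.ball a r \ {a}) := by
  have h : Metric.ball a r \ {a} = (fun ζ => a + Complex.exp ζ) '' {ζ : ℂ | ζ.re < Real.log r} := by
    ext z
    constructor
    · rintro ⟨hz, hza⟩
      have hne : z - a ≠ 0 := sub_ne_zero.2 hza
      refine ⟨Complex.log (z - a), ?_, ?_⟩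
      · change (Complex.log (z - a)).re < _
        rw [Complex.log_re]
        apply Real.log_lt_log (norm_pos_iff.2 hne)
        rwa [Metric.mem_ball, Complex.dist_eq] at hz
      · change a + Complex.exp (Complex.log (z - a)) = z
        rw [Complex.exp_log hne]; ring
    · rintro ⟨ζ, hζ, rfl⟩
      refine ⟨?_, ?_⟩
      · rw [Metric.mem_ball, Complex.dist_eq, add_sub_cancel_left, Complex.norm_exp]
        exact (Real.lt_log_iff_exp_lt hr).1 hζ
      · intro h
        have : a + Complex.exp ζ = a := h
        exact Complex.exp_ne_zero ζ (by simpa using this)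
  rw [h]
  exact (convex_halfSpace_re_lt _).isPreconnected.image _ (by fun_prop)

theorem remove_one (W : Set ℂ) (hW : IsOpen W) (hWc : IsPreconnected W) (a : ℂ) :
    IsPreconnected (W \ {a}) := by
  by_cases ha : a ∈ W
  swap
  · rwa [diff_singleton_eq_self ha]
  obtain ⟨r, hr, hrW⟩ := Metric.isOpen_iff.1 hW a ha
  rw [isPreconnected_iff_subset_of_disjoint]
  have key : ∀ u v : Set ℂ, IsOpen u → IsOpen v → W \ {a} ⊆ u ∪ v → (W \ {a}) ∩ (u ∩ v) = ∅ →
      Metric.ball a r \ {a} ⊆ u → W \ {a} ⊆ u := by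
    intro u v hu hv huv hd hBu z hz
    by_contra hzu
    obtain ⟨y, hyW, hy1, hy2⟩ := hWc (u ∪ Metric.ball a r) (v \ {a}) (hu.union Metric.isOpen_ball)
      (hv.sdiff isClosed_singleton) (by
        intro y hy
        by_cases hya : y = a
        · exact Or.inl (Or.inr (hya ▸ Metric.mem_ball_self hr))
        · rcases huv ⟨hy, hya⟩ with h | h
          · exact Or.inl (Or.inl h)
          · exact Or.inr ⟨h, hya⟩) ⟨a, ha, Or.inr (Metric.mem_ball_self hr)⟩
      ⟨z, hz.1, (huv hz).resolve_left hzu, hz.2⟩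
    have hyu : y ∈ u := by
      rcases hy1 with h | h
      · exact h
      · exact hBu ⟨h, hy2.2⟩
    exact (eq_empty_iff_forall_notMem.1 hd y) ⟨⟨hyW, hy2.2⟩, hyu, hy2.1⟩
  intro u v hu hv huv hd
  have hsub : Metric.ball a r \ {a} ⊆ W \ {a} := diff_subset_diff_left hrW
  rcases (isPreconnected_iff_subset_of_disjoint.1 (punct_ball a r hr)) u v hu hv (hsub.trans huv)
    (subset_eq_empty (inter_subset_inter_left _ hsub) hd) with h | h
  · exact Or.inl (key u v hu hv huv hd h)
  · exact Or.inr (key v u hv hu (by rwa [union_comm]) (by rwa [inter_comm v u]) h)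

theorem remove_finite (W F : Set ℂ) (hF : F.Finite) (hW : IsOpen W) (hWc : IsPreconnected W) :
    IsPreconnected (W \ F) := by
  induction F, hF using Set.Finite.induction_on with
  | empty => simpa using hWc
  | @insert a s _ hs ih =>
    have : W \ insert a s = (W \ s) \ {a} := by
      ext z; simp only [mem_sdiff, mem_insert_iff, mem_singleton_iff]; tauto
    rw [this]
    exact remove_one _ (hW.sdiff hs.isClosed) ih a

theorem fin_fibre (W V : Set ℂ) (f : ℂ → ℂ) (hW : IsOpen W) (hWc : IsPreconnected W)
    (hf : DifferentiableOn ℂ f W)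
    (hproper : ∀ K : Set ℂ, K ⊆ V → IsCompact K → IsCompact {z ∈ W | f z ∈ K})
    (w : ℂ) (hw : w ∈ V) : {z ∈ W | f z = w}.Finite := by
  by_contra hinf
  have hK : IsCompact {z ∈ W | f z = w} := by
    simpa using hproper {w} (by simpa using hw) isCompact_singleton
  obtain ⟨z0, hz0, hacc⟩ := Set.Infinite.exists_accPt_of_subset_isCompact hinf hK subset_rfl
  rw [accPt_iff_frequently_nhdsNE] at hacc
  have := (hf.analyticOnNhd hW).eqOn_of_preconnected_of_frequently_eq
    (g := fun _ => w) analyticOnNhd_const hWc hz0.1 (hacc.mono fun y hy => hy.2)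
  have he : {z ∈ W | f z = w} = W := by
    ext z; exact ⟨fun h => h.1, fun h => ⟨h, this h⟩⟩
  rw [he] at hK
  rcases isClopen_iff.1 ⟨hK.isClosed, hW⟩ with h | h
  · rw [h] at hz0; exact hz0.1
  · rw [h] at hK; exact noncompact_univ ℂ hK

theorem covering_an (W V CV : Set ℂ) (f : ℂ → ℂ) (hW : IsOpen W) (hWc : IsPreconnected W)
    (hV : IsOpen V) (hf : DifferentiableOn ℂ f W) (hmaps : MapsTo f W V)
    (hproper : ∀ K : Set ℂ, K ⊆ V → IsCompact K → IsCompact {z ∈ W | f z ∈ K})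
    (hCV : ∀ z ∈ W, deriv f z = 0 → f z ∈ CV) :
    IsCoveringMapOn (fun e : W => f e.1) (V \ CV) := by
  have : LocallyCompactSpace V := hV.locallyCompactSpace
  let p : W → V := fun e => ⟨f e.1, hmaps e.2⟩
  have hpc : Continuous p :=
    Continuous.subtype_mk (continuousOn_iff_continuous_domRestrict.1 hf.continuousOn) _
  have hprop : IsProperMap p := by
    rw [isProperMap_iff_isCompact_preimage]
    refine ⟨hpc, fun K hK => ?_⟩
    rw [IsInducing.subtypeVal.isCompact_iff] at hK ⊢
    have := hproper _ (by rintro _ ⟨y, _, rfl⟩; exact y.2) hK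
    convert! this using 1
    ext z
    constructor
    · rintro ⟨e, he, rfl⟩
      exact ⟨e.2, p e, he, rfl⟩
    · rintro ⟨hz, y, hy, hyz⟩
      refine ⟨⟨z, hz⟩, ?_, rfl⟩
      have : p ⟨z, hz⟩ = y := Subtype.ext hyz.symm
      rw [mem_preimage, this]
      exact hy
  intro x hx
  have hcov : IsEvenlyCovered p ⟨x, hx.1⟩ (p ⁻¹' {⟨x, hx.1⟩}) := by
    refine hprop.isClosedMap.isEvenlyCovered_of_openPartialHomeomorph ?_ ?_
    · have := fin_fibre W V f hW hWc hf hproper x hx.1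
      refine Set.Finite.of_finite_image (f := Subtype.val) (this.subset ?_)
        Subtype.val_injective.injOn
      rintro _ ⟨e, he, rfl⟩
      exact ⟨e.2, congrArg Subtype.val he⟩
    · intro e he
      have hex : f e.1 = x := congrArg Subtype.val he
      have hder : deriv f e.1 ≠ 0 := fun h => hx.2 (hex ▸ hCV e.1 e.2 h)
      have h1 : IsLocalHomeomorphOn f {e.1} := by
        intro z hz
        rw [mem_singleton_iff] at hz
        subst hz
        have hs := ((hf.analyticOnNhd hW) e.1 e.2).hasStrictDerivAt
        have hs' := hs.hasStrictFDerivAt_equiv hder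
        exact ⟨hs'.toOpenPartialHomeomorph f, hs'.mem_toOpenPartialHomeomorph_source, rfl⟩
      have h2 : IsLocalHomeomorphOn (f ∘ (Subtype.val : W → ℂ)) {e} :=
        h1.comp (hW.isOpenEmbedding_subtypeVal.isLocalHomeomorph.isLocalHomeomorphOn)
          (by intro y hy; rw [mem_singleton_iff] at hy; subst hy; rfl)
      have h3 : IsLocalHomeomorphOn p {e} := by
        refine IsLocalHomeomorphOn.of_comp_left (g := (Subtype.val : V → ℂ)) h2
          (hV.isOpenEmbedding_subtypeVal.isLocalHomeomorph.isLocalHomeomorphOn)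
          (fun y _ => hpc.continuousAt)
      obtain ⟨φ, hφ, hφe⟩ := h3 e rfl
      exact ⟨φ, hφ, hφe.symm⟩
  exact (hcov.subtypeVal_comp V hV).to_isEvenlyCovered_preimage

theorem key_an (W U V : Set ℂ) (f : ℂ → ℂ) (hW : IsOpen W) (hWc : IsPreconnected W)
    (hf : DifferentiableOn ℂ f W) (hmaps : MapsTo f W V)
    (hproper : ∀ K : Set ℂ, K ⊆ V → IsCompact K → IsCompact {z ∈ W | f z ∈ K})
    (hcrit : ∀ z ∈ W, deriv f z = 0 → f z ∈ U)
    (hUne : U.Nonempty) (hUopen : IsOpen U) (hUconn : IsPreconnected U)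
    (hVopen : IsOpen V) (hVconn : IsPreconnected V)
    (hUcpt : IsCompact (closure U)) (hUV : closure U ⊆ V)
    (hfinU : {C : Set (OnePoint ℂ) |
      ∃ x ∈ (sph U)ᶜ, C = connectedComponentIn (sph U)ᶜ x}.Finite)
    (hcompUV : ∀ x ∈ (sph U)ᶜ, ∀ y₁ ∈ (sph V)ᶜ, ∀ y₂ ∈ (sph V)ᶜ,
      connectedComponentIn (sph V)ᶜ y₁ ⊆ connectedComponentIn (sph U)ᶜ x →
      connectedComponentIn (sph V)ᶜ y₂ ⊆ connectedComponentIn (sph U)ᶜ x →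
      connectedComponentIn (sph V)ᶜ y₁ = connectedComponentIn (sph V)ᶜ y₂) :
    IsPreconnected {z ∈ W | f z ∈ U} := by
  have : LocallyPathConnectedSpace W := hW.locallyPathConnectedSpace
  set Cr : Set ℂ := {z ∈ W | deriv f z = 0} with hCr
  have hCrc : IsCompact Cr := by
    have hM := hproper _ hUV hUcpt
    have hdc : ContinuousOn (deriv f) {z ∈ W | f z ∈ closure U} :=
      ((hf.deriv hW).continuousOn).mono fun z hz => hz.1
    have hcl := hdc.preimage_isClosed_of_isClosed hM.isClosed (isClosed_singleton (x := (0:ℂ)))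
    have he : Cr = {z ∈ W | f z ∈ closure U} ∩ deriv f ⁻¹' {0} := by
      ext z
      constructor
      · intro h; exact ⟨⟨h.1, subset_closure (hcrit z h.1 h.2)⟩, h.2⟩
      · intro h; exact ⟨h.1.1, h.2⟩
    rw [he]
    exact hM.of_isClosed_subset hcl inter_subset_left
  have hCV : IsCompact (f '' Cr) := hCrc.image_of_continuousOn (hf.continuousOn.mono fun z hz => hz.1)
  have hmain := key_top (fun e : W => f e.1)
    (continuousOn_iff_continuous_domRestrict.1 hf.continuousOn) U V (f '' Cr)
    (fun e => hmaps e.2) hUne hUopen hUconn hVopen hVconn (subset_closure.trans hUV) hfinU hcompUV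
    hCV (by rintro _ ⟨z, hz, rfl⟩; exact hcrit z hz.1 hz.2)
    (covering_an W V (f '' Cr) f hW hWc hVopen hf hmaps hproper
      (fun z hz h => ⟨z, ⟨hz, h⟩, rfl⟩)) (by
      intro T hT hTV
      rw [← IsInducing.subtypeVal.isPreconnected_image]
      have hfin : {z ∈ W | f z ∈ T}.Finite := by
        have : {z ∈ W | f z ∈ T} = ⋃ w ∈ T, {z ∈ W | f z = w} := by
          ext z; simp only [mem_setOf_eq, mem_iUnion, exists_prop]
          constructor
          · intro h; exact ⟨f z, h.2, h.1, rfl⟩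
          · rintro ⟨w, hw, hz, rfl⟩; exact ⟨hz, hw⟩
        rw [this]
        exact hT.biUnion fun w hw => fin_fibre W V f hW hWc hf hproper w (hTV hw)
      convert! remove_finite W _ hfin hW hWc using 1
      ext z
      constructor
      · rintro ⟨e, he, rfl⟩
        exact ⟨e.2, fun h => he h.2⟩
      · rintro ⟨hz, h⟩
        exact ⟨⟨z, hz⟩, fun h' => h ⟨hz, h'⟩, rfl⟩)
  rw [← IsInducing.subtypeVal.isPreconnected_image] at hmain
  convert! hmain using 1
  ext z
  constructor
  · rintro ⟨hz, h⟩; exact ⟨⟨z, hz⟩, h, rfl⟩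
  · rintro ⟨e, he, rfl⟩; exact ⟨e.2, he⟩

end

section
open Set Topology

theorem conn_iInter (t : ℕ → Set ℂ) (hanti : Antitone t) (hc : ∀ i, IsCompact (t i))
    (hp : ∀ i, IsPreconnected (t i)) : IsPreconnected (⋂ i, t i) := by
  have hcl : IsClosed (⋂ i, t i) := isClosed_iInter fun i => (hc i).isClosed
  rw [isPreconnected_iff_subset_of_fully_disjoint_closed hcl]
  intro u v hu hv huv hd
  obtain ⟨O1, O2, h1, h2, hu1, hv2, hO⟩ := normal_separation hu hv hd
  obtain ⟨i, hi⟩ := exists_subset_nhds_of_isCompact hanti.directed_ge hc (U := O1 ∪ O2) (by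
    intro x hx
    apply (h1.union h2).mem_nhds
    exact (huv hx).imp (fun h => hu1 h) (fun h => hv2 h))
  rcases (isPreconnected_iff_subset_of_disjoint.1 (hp i)) O1 O2 h1 h2 hi
    (by rw [hO.inter_eq, inter_empty]) with h | h
  · left
    intro x hx
    rcases huv hx with h' | h'
    · exact h'
    · exact (disjoint_left.1 hO (h (mem_iInter.1 hx i)) (hv2 h')).elim
  · right
    intro x hx
    rcases huv hx with h' | h'
    · exact (disjoint_left.1 hO (hu1 h') (h (mem_iInter.1 hx i))).elim
    · exact h'

theorem Vseq_succ (g : ℂ → ℂ) (U V : Set ℂ) (k : ℕ) :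
    Vseq g U V (k + 1) = {z | z ∈ U ∧ g z ∈ Vseq g U V k} := rfl

theorem Vseq_of_orbit (g : ℂ → ℂ) (U V : Set ℂ) (hUV : U ⊆ V) (k : ℕ) :
    ∀ z, (∀ j, g^[j] z ∈ U) → z ∈ Vseq g U V k := by
  induction k with
  | zero => intro z hz; exact hUV (hz 0)
  | succ k ih =>
    intro z hz
    exact ⟨hz 0, ih (g z) fun j => hz (j + 1)⟩

theorem Vseq_subset (g : ℂ → ℂ) (U V : Set ℂ) (hUV : U ⊆ V) (k : ℕ) : Vseq g U V k ⊆ V := by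
  cases k with
  | zero => exact subset_rfl
  | succ k => exact fun z hz => hUV hz.1

theorem Vseq_props (U V : Set ℂ) (g : ℂ → ℂ)
    (hUopen : IsOpen U) (hVopen : IsOpen V) (hUV : U ⊆ V)
    (hghol : DifferentiableOn ℂ g U) (hgonto : g '' U = V)
    (hgproper : ∀ K : Set ℂ, K ⊆ V → IsCompact K → IsCompact {z ∈ U | g z ∈ K})
    (hcrit : ∀ c ∈ U, deriv g c = 0 → ∀ k : ℕ, g^[k] c ∈ U) (k : ℕ) :
    IsOpen (Vseq g U V k) ∧ DifferentiableOn ℂ (g^[k]) (Vseq g U V k) ∧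
    MapsTo (g^[k]) (Vseq g U V k) V ∧
    (∀ K : Set ℂ, K ⊆ V → IsCompact K → IsCompact {z ∈ Vseq g U V k | g^[k] z ∈ K}) ∧
    (∀ z ∈ Vseq g U V k, deriv (g^[k]) z = 0 → g^[k] z ∈ U) ∧
    Vseq g U V (k + 1) = {z ∈ Vseq g U V k | g^[k] z ∈ U} := by
  induction k with
  | zero =>
    refine ⟨hVopen, differentiableOn_id, fun z hz => hz, ?_, ?_, ?_⟩
    · intro K hKV hK
      have : {z ∈ Vseq g U V 0 | g^[0] z ∈ K} = K := by
        ext z; exact ⟨fun h => h.2, fun h => ⟨hKV h, h⟩⟩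
      rw [this]; exact hK
    · intro z hz h
      rw [Function.iterate_zero, deriv_id] at h
      exact absurd h one_ne_zero
    · ext z
      constructor
      · intro h; exact ⟨hUV h.1, h.1⟩
      · intro h; exact ⟨h.2, hgonto ▸ mem_image_of_mem g h.2⟩
  | succ k ih =>
    obtain ⟨h1, h2, h3, h4, h5, h6⟩ := ih
    have hg : MapsTo g (Vseq g U V (k + 1)) (Vseq g U V k) := fun z hz => hz.2
    have hghol' : DifferentiableOn ℂ g (Vseq g U V (k + 1)) := hghol.mono fun z hz => hz.1
    refine ⟨hghol.continuousOn.isOpen_inter_preimage hUopen h1, ?_, ?_, ?_, ?_, ?_⟩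
    · rw [Function.iterate_succ]
      exact h2.comp hghol' hg
    · intro z hz
      exact h3 (hg hz)
    · intro K hKV hK
      have := hgproper _ (fun z hz => Vseq_subset g U V hUV k hz.1) (h4 K hKV hK)
      convert! this using 1
      ext z
      constructor
      · rintro ⟨h, h'⟩; exact ⟨h.1, h.2, h'⟩
      · rintro ⟨h, h', h''⟩; exact ⟨⟨h, h'⟩, h''⟩
    · intro z hz hd
      have hdg : DifferentiableAt ℂ g z := hghol.differentiableAt (hUopen.mem_nhds hz.1)
      have hdk : DifferentiableAt ℂ (g^[k]) (g z) := h2.differentiableAt (h1.mem_nhds hz.2)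
      rw [Function.iterate_succ, deriv_comp z hdk hdg, mul_eq_zero] at hd
      rcases hd with hd | hd
      · exact h5 (g z) hz.2 hd
      · exact hcrit z hz.1 hd (k + 1)
    · ext z
      constructor
      · intro h
        have h7 : g z ∈ Vseq g U V (k + 1) := h.2
        rw [h6] at h7
        exact ⟨⟨h.1, h7.1⟩, h7.2⟩
      · rintro ⟨⟨h, h'⟩, h''⟩
        have h7 : g z ∈ Vseq g U V (k + 1) := by rw [h6]; exact ⟨h', h''⟩
        exact ⟨h, h7⟩

theorem two_preimages (U V : Set ℂ) (g : ℂ → ℂ)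
    (hUopen : IsOpen U) (hUconn : IsPreconnected U) (hVopen : IsOpen V) (hVconn : IsPreconnected V)
    (hghol : DifferentiableOn ℂ g U) (hgonto : g '' U = V)
    (hgproper : ∀ K : Set ℂ, K ⊆ V → IsCompact K → IsCompact {z ∈ U | g z ∈ K})
    (hgnoninj : ¬ Set.InjOn g U)
    (hcr : ∀ c ∈ U, deriv g c ≠ 0) (q : ℂ) (hq : q ∈ V) :
    ∃ z ∈ U, ∃ z' ∈ U, z ≠ z' ∧ g z = q ∧ g z' = q := by
  have hmaps : MapsTo g U V := fun z hz => hgonto ▸ mem_image_of_mem g hz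
  have hcov := covering_an U V ∅ g hUopen hUconn hVopen hghol hmaps hgproper
    (fun z hz h => absurd h (hcr z hz))
  rw [diff_empty] at hcov
  unfold InjOn at hgnoninj
  push Not at hgnoninj
  obtain ⟨z, hz, z', hz', he, hne⟩ := hgnoninj
  have hpc : IsPathConnected V :=
    hVopen.isConnected_iff_isPathConnected.1 ⟨⟨q, hq⟩, hVconn⟩
  obtain ⟨γ, hγ⟩ := hpc.joinedIn (g z) (hmaps hz) q hq
  have : ContractibleSpace unitInterval :=
    (convex_Icc (0:ℝ) 1).contractibleSpace ⟨0, by simp⟩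
  have : LocallyPathConnectedSpace unitInterval :=
    (isQuotientMap_projIcc (h := zero_le_one (α := ℝ))).locallyPathConnectedSpace
  obtain ⟨F, ⟨hF0, hF⟩, -⟩ := hcov.existsUnique_continuousMap_lifts γ.toContinuousMap
    (a₀ := 0) (e₀ := (⟨z, hz⟩ : U)) (by simp) hγ
  obtain ⟨F', ⟨hF'0, hF'⟩, -⟩ := hcov.existsUnique_continuousMap_lifts γ.toContinuousMap
    (a₀ := 0) (e₀ := (⟨z', hz'⟩ : U)) (by simpa using he.symm) hγ
  have e1 : g (F 1).1 = q := by have := congrFun hF 1; simpa using this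
  have e1' : g (F' 1).1 = q := by have := congrFun hF' 1; simpa using this
  refine ⟨_, (F 1).2, _, (F' 1).2, ?_, e1, e1'⟩
  intro heq
  have heq' : F' 1 = F 1 := (Subtype.ext heq).symm
  obtain ⟨F'', -, hF''⟩ := hcov.existsUnique_continuousMap_lifts γ.toContinuousMap
    (a₀ := 1) (e₀ := F 1) (by simpa using e1) hγ
  have hFF : F = F' := (hF'' F ⟨rfl, hF⟩).trans (hF'' F' ⟨heq', hF'⟩).symm
  apply hne
  have : (⟨z, hz⟩ : U) = ⟨z', hz'⟩ := by rw [← hF0, ← hF'0, hFF]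
  exact congrArg Subtype.val this

theorem superattr (U : Set ℂ) (g : ℂ → ℂ) (hUopen : IsOpen U) (hghol : DifferentiableOn ℂ g U)
    (q : ℂ) (hq : q ∈ U) (hfix : g q = q) (hd : deriv g q = 0) :
    ∃ z, z ≠ q ∧ ∀ j, g^[j] z ∈ U := by
  have hder : HasDerivAt g 0 q := hd ▸ (hghol.differentiableAt (hUopen.mem_nhds hq)).hasDerivAt
  have h1 := (hasDerivAt_iff_isLittleO.1 hder).def (one_pos)
  obtain ⟨r, hr, hball⟩ := Metric.mem_nhds_iff.1 (Filter.inter_mem h1 (hUopen.mem_nhds hq))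
  have hstep : ∀ z ∈ Metric.ball q r, g z ∈ Metric.ball q r := by
    intro z hz
    have := (hball hz).1
    simp only [hfix, smul_zero, sub_zero, one_mul, mem_setOf_eq] at this
    rw [Metric.mem_ball, dist_eq_norm] at hz ⊢
    exact this.trans_lt hz
  have horb : ∀ j, ∀ z ∈ Metric.ball q r, g^[j] z ∈ Metric.ball q r := by
    intro j
    induction j with
    | zero => exact fun z hz => hz
    | succ j ih => exact fun z hz => ih _ (hstep z hz)
  refine ⟨q + (r / 2 : ℝ), ?_, fun j => (hball (horb j _ ?_)).2⟩
  · intro h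
    have h2 : ((r / 2 : ℝ) : ℂ) = 0 := by linear_combination h
    rw [Complex.ofReal_eq_zero] at h2
    linarith
  · rw [Metric.mem_ball, dist_eq_norm, add_sub_cancel_left, Complex.norm_real, Real.norm_eq_abs,
      abs_of_pos (by linarith)]
    linarith

theorem rationalLike_aux (U V : Set ℂ) (g : ℂ → ℂ)
    (hUne : U.Nonempty) (hUopen : IsOpen U) (hUconn : IsPreconnected U)
    (hVne : V.Nonempty) (hVopen : IsOpen V) (hVconn : IsPreconnected V)
    (hUcpt : IsCompact (closure U)) (hUV : closure U ⊆ V)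
    (hfinU : {C : Set (OnePoint ℂ) |
      ∃ x ∈ (sph U)ᶜ, C = connectedComponentIn (sph U)ᶜ x}.Finite)
    (hghol : DifferentiableOn ℂ g U) (hgonto : g '' U = V)
    (hgproper : ∀ K : Set ℂ, K ⊆ V → IsCompact K → IsCompact {z ∈ U | g z ∈ K})
    (hgnoninj : ¬ Set.InjOn g U)
    (hcrit : ∀ c ∈ U, deriv g c = 0 → ∀ k : ℕ, g^[k] c ∈ U)
    (hcompUV : ∀ x ∈ (sph U)ᶜ, ∀ y₁ ∈ (sph V)ᶜ, ∀ y₂ ∈ (sph V)ᶜ,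
      connectedComponentIn (sph V)ᶜ y₁ ⊆ connectedComponentIn (sph U)ᶜ x →
      connectedComponentIn (sph V)ᶜ y₂ ⊆ connectedComponentIn (sph U)ᶜ x →
      connectedComponentIn (sph V)ᶜ y₁ = connectedComponentIn (sph V)ᶜ y₂) :
    (∀ k : ℕ, 1 ≤ k → IsConnected (Vseq g U V k)) ∧
    IsCompact (⋂ k, Vseq g U V k) ∧
    IsConnected (⋂ k, Vseq g U V k) ∧
    (⋂ k, Vseq g U V k).Nontrivial := by
  have hUV' : U ⊆ V := subset_closure.trans hUV
  have hP := Vseq_props U V g hUopen hVopen hUV' hghol hgonto hgproper hcrit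
  have hne : ∀ k, (Vseq g U V k).Nonempty := by
    intro k
    induction k with
    | zero => exact hVne
    | succ k ih =>
      obtain ⟨y, hy⟩ := ih
      have hyV : y ∈ g '' U := hgonto ▸ Vseq_subset g U V hUV' k hy
      obtain ⟨z, hz, rfl⟩ := hyV
      exact ⟨z, hz, hy⟩
  have hconn : ∀ k, IsPreconnected (Vseq g U V k) := by
    intro k
    induction k with
    | zero => exact hVconn
    | succ k ih =>
      obtain ⟨h1, h2, h3, h4, h5, h6⟩ := hP k
      rw [h6]
      exact key_an _ U V (g^[k]) h1 ih h2 h3 h4 h5 hUne hUopen hUconn hVopen hVconn hUcpt hUV hfinU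
        hcompUV
  have hsub : ∀ k, Vseq g U V (k + 1) ⊆ Vseq g U V k := by
    intro k
    rw [(hP k).2.2.2.2.2]
    exact fun z hz => hz.1
  have hclU : ∀ k, closure (Vseq g U V (k + 1)) ⊆ closure U := fun k =>
    closure_mono fun z hz => hz.1
  have hccpt : ∀ k, IsCompact (closure (Vseq g U V (k + 1))) := fun k =>
    hUcpt.of_isClosed_subset isClosed_closure (hclU k)
  have hcl : ∀ k, closure (Vseq g U V (k + 1)) ⊆ Vseq g U V k := by
    intro k
    induction k with
    | zero => exact (hclU 0).trans hUV
    | succ k ih =>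
      have hM := hgproper _ ((hclU k).trans hUV) (hccpt k)
      have : Vseq g U V (k + 2) ⊆ {z ∈ U | g z ∈ closure (Vseq g U V (k + 1))} :=
        fun z hz => ⟨hz.1, subset_closure hz.2⟩
      have := closure_minimal this hM.isClosed
      exact fun z hz => ⟨(this hz).1, ih (this hz).2⟩
  have hanti : Antitone fun k => closure (Vseq g U V (k + 1)) :=
    antitone_nat_of_succ_le fun k => closure_mono (hsub (k + 1))
  have hK : (⋂ k, Vseq g U V k) = ⋂ k, closure (Vseq g U V (k + 1)) := by
    apply subset_antisymm
    · exact subset_iInter fun k => (iInter_subset _ (k + 1)).trans subset_closure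
    · exact subset_iInter fun k => (iInter_subset _ k).trans (hcl k)
  have hKne : (⋂ k, Vseq g U V k).Nonempty := by
    rw [hK]
    exact IsCompact.nonempty_iInter_of_sequence_nonempty_isCompact_isClosed _
      (fun k => hanti (Nat.le_succ k)) (fun k => (hne (k + 1)).closure) (hccpt 0)
      (fun k => isClosed_closure)
  refine ⟨fun k _ => ⟨hne k, hconn k⟩, ?_, ⟨hKne, ?_⟩, ?_⟩
  · rw [hK]
    exact (hccpt 0).of_isClosed_subset (isClosed_iInter fun k => isClosed_closure)
      (iInter_subset _ 0)
  · rw [hK]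
    exact conn_iInter _ hanti hccpt fun k => (hconn (k + 1)).closure
  · by_contra hnt
    rw [not_nontrivial_iff] at hnt
    obtain ⟨q, hq⟩ := hKne
    have hback : ∀ z ∈ U, g z ∈ (⋂ k, Vseq g U V k) → z ∈ ⋂ k, Vseq g U V k := by
      intro z hz h
      rw [mem_iInter]
      intro k
      exact hsub k ⟨hz, mem_iInter.1 h k⟩
    have hqV : q ∈ V := mem_iInter.1 hq 0
    have hqU : q ∈ U := (mem_iInter.1 hq 1).1
    by_cases hc : ∃ c ∈ U, deriv g c = 0
    · obtain ⟨c, hcU, hcd⟩ := hc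
      have hcK : c ∈ ⋂ k, Vseq g U V k :=
        mem_iInter.2 fun k => Vseq_of_orbit g U V hUV' k c (hcrit c hcU hcd)
      have hcq : c = q := hnt hcK hq
      subst hcq
      have hgK : g c ∈ ⋂ k, Vseq g U V k :=
        mem_iInter.2 fun k => (mem_iInter.1 hq (k + 1)).2
      obtain ⟨z, hzne, hz⟩ := superattr U g hUopen hghol c hcU (hnt hgK hq) hcd
      exact hzne (hnt (mem_iInter.2 fun k => Vseq_of_orbit g U V hUV' k z hz) hq)
    · push Not at hc
      obtain ⟨z, hz, z', hz', hzz, e1, e2⟩ := two_preimages U V g hUopen hUconn hVopen hVconn hghol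
        hgonto hgproper hgnoninj hc q hqV
      exact hzz (hnt (hback z hz (e1 ▸ hq)) (hback z' hz' (e2 ▸ hq)))

end

/-!
STATEMENT 15 (Proposition 5.2): Let `g : U → V` be a rational-like map:
`U, V ⊆ ℂ` nonempty connected open with `closure U` compact and contained in
`V`, the complements of `U` and `V` in `ℂ̂` have finitely many components,
`g` holomorphic on `U`, proper onto `V`, not injective, all critical orbits
stay in `U`, and each component of `ℂ̂ ∖ U` contains at most one component of
`ℂ̂ ∖ V`.  Then every `V_k` (`k ≥ 1`) is connected and the filled Julia set
`K_g = ⋂_k V_k` is a continuum: nonempty, compact, connected, with more than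
one point.
-/
theorem rationalLike_filledJulia_is_continuum (U V : Set ℂ) (g : ℂ → ℂ)
    (hUne : U.Nonempty) (hUopen : IsOpen U) (hUconn : IsPreconnected U)
    (hVne : V.Nonempty) (hVopen : IsOpen V) (hVconn : IsPreconnected V)
    (hUcpt : IsCompact (closure U)) (hUV : closure U ⊆ V)
    (hfinU : {C : Set (OnePoint ℂ) |
      ∃ x ∈ (sph U)ᶜ, C = connectedComponentIn (sph U)ᶜ x}.Finite)
    (hfinV : {C : Set (OnePoint ℂ) |
      ∃ x ∈ (sph V)ᶜ, C = connectedComponentIn (sph V)ᶜ x}.Finite)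
    (hghol : DifferentiableOn ℂ g U) (hgonto : g '' U = V)
    (hgproper : ∀ K : Set ℂ, K ⊆ V → IsCompact K → IsCompact {z ∈ U | g z ∈ K})
    (hgnoninj : ¬ Set.InjOn g U)
    (hcrit : ∀ c ∈ U, deriv g c = 0 → ∀ k : ℕ, g^[k] c ∈ U)
    (hcompUV : ∀ x ∈ (sph U)ᶜ, ∀ y₁ ∈ (sph V)ᶜ, ∀ y₂ ∈ (sph V)ᶜ,
      connectedComponentIn (sph V)ᶜ y₁ ⊆ connectedComponentIn (sph U)ᶜ x →
      connectedComponentIn (sph V)ᶜ y₂ ⊆ connectedComponentIn (sph U)ᶜ x →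
      connectedComponentIn (sph V)ᶜ y₁ = connectedComponentIn (sph V)ᶜ y₂) :
    (∀ k : ℕ, 1 ≤ k → IsConnected (Vseq g U V k)) ∧
    IsCompact (⋂ k, Vseq g U V k) ∧
    IsConnected (⋂ k, Vseq g U V k) ∧
    (⋂ k, Vseq g U V k).Nontrivial := by
  exact rationalLike_aux U V g hUne hUopen hUconn hVne hVopen hVconn hUcpt hUV hfinU hghol
    hgonto hgproper hgnoninj hcrit hcompUV

end
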